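/- arXiv:1406.0167 — 4 statements merged into one kernel-verified Lean document; each statement's English description precedes it below -/
import Mathlib

section
/- Let ℓ, r, d be positive integers with r > ℓ, and let V ∈ ℝ^{d×ℓ} satisfy V^T V = I_ℓ. Then there exists a sampling-and-rescaling matrix R ∈ ℝ^{d×r} such that for every y ∈ ℝ^ℓ, (1 − √(ℓ/r))² · ‖Vy‖₂² ≤ ‖R^T V y‖₂² ≤ (1 + √(ℓ/r))² · ‖Vy‖₂². -/
open Matrix

/-- Euclidean norm of a vector in ℝ^n. -/
noncomputable def euclNorm {n : ℕ} (x : Fin n → ℝ) : ℝ := Real.sqrt (∑ i, x i ^ 2)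

/-- `R ∈ ℝ^{d×r}` is a sampling-and-rescaling matrix: each column is a positive
multiple of a standard basis vector of ℝ^d. -/
def IsSamplingRescaling {d r : ℕ} (R : Matrix (Fin d) (Fin r) ℝ) : Prop :=
  ∃ (idx : Fin r → Fin d) (w : Fin r → ℝ),
    (∀ t, 0 < w t) ∧ ∀ t i, R i t = w t * (if i = idx t then 1 else 0)

/-!
This is the barrier argument of Batson, Spielman and Srivastava. Put `ρ = √(ℓ / r)` and build a sum
`A` of `r` weighted rank-one matrices `t • v vᵀ`, where `v` runs over rows of `V`, while keeping the
spectrum of `A` between a lower barrier `l` and an upper barrier `u`. How close the spectrum comes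
to the barriers is measured by the potentials `tr (u - A)⁻¹` and `tr (A - l)⁻¹`. At each step the
barriers move up by `(1 - ρ) / r` and `(1 + ρ) / r`. By the Sherman-Morrison formula the upper
potential does not grow if `t * U(v) < 1`, and the lower one does not grow if `1 ≤ t * L(v)`, where
`U` and `L` are combinations of quadratic forms in `v`. As the rows satisfy `∑ v vᵀ = 1`, summing a
quadratic form over them gives its trace, and `∑ U(v) < ∑ L(v)` follows; hence some row admits a
common weight `t`. Starting from `A = 0` between `-ρ (1 - ρ)` and `ρ (1 + ρ)`, the barriers end at
`(1 - ρ)²` and `(1 + ρ)²`.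
-/

namespace SpectralSparsification

section RankOneUpdate

variable {n K : Type*} [Fintype n] [DecidableEq n] [Field K]

lemma inv_add_vecMulVec {N : Matrix n n K} (hN : IsUnit N) {u v : n → K}
    (h : 1 + v ⬝ᵥ N⁻¹ *ᵥ u ≠ 0) :
    (N + vecMulVec u v)⁻¹ =
      N⁻¹ - (1 + v ⬝ᵥ N⁻¹ *ᵥ u)⁻¹ • vecMulVec (N⁻¹ *ᵥ u) (v ᵥ* N⁻¹) := by
  have hscalar : (1 : Matrix Unit Unit K)⁻¹ + replicateRow Unit v * N⁻¹ * replicateCol Unit u =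
      (1 + v ⬝ᵥ N⁻¹ *ᵥ u) • 1 := by
    rw [Matrix.mul_assoc, ← replicateCol_mulVec, inv_one]
    ext
    simp
  have hinv : ((1 + v ⬝ᵥ N⁻¹ *ᵥ u) • (1 : Matrix Unit Unit K))⁻¹ =
      (1 + v ⬝ᵥ N⁻¹ *ᵥ u)⁻¹ • 1 := inv_eq_right_inv (by simp [smul_smul, h])
  have hwoodbury := add_mul_mul_inv_eq_sub N (replicateCol Unit u) 1 (replicateRow Unit v) hN
    isUnit_one (by rw [hscalar]; exact isUnit_one.smul (Units.mk0 _ h))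
  rw [hscalar, hinv, Matrix.mul_one, ← vecMulVec_eq] at hwoodbury
  rw [hwoodbury, Matrix.mul_smul, Matrix.mul_one, Matrix.smul_mul, Matrix.smul_mul,
    Matrix.mul_assoc _ _ N⁻¹, ← replicateCol_mulVec, ← replicateRow_vecMul, ← vecMulVec_eq]

lemma trace_inv_add_vecMulVec {N : Matrix n n K} (hN : IsUnit N) {u v : n → K}
    (h : 1 + v ⬝ᵥ N⁻¹ *ᵥ u ≠ 0) :
    (N + vecMulVec u v)⁻¹.trace =
      N⁻¹.trace - (v ⬝ᵥ N⁻¹ ^ 2 *ᵥ u) / (1 + v ⬝ᵥ N⁻¹ *ᵥ u) := by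
  rw [inv_add_vecMulVec hN h, trace_sub, trace_smul, trace_vecMulVec,
    dotProduct_comm (N⁻¹ *ᵥ u), ← dotProduct_mulVec, mulVec_mulVec, ← sq, smul_eq_mul,
    inv_mul_eq_div]

end RankOneUpdate

section PosDefUpdate

variable {n : Type*} [Fintype n] [DecidableEq n]

lemma sq_dotProduct_le_mul_dotProduct_mulVec {N : Matrix n n ℝ} (hN : N.PosDef) (v x : n → ℝ) :
    (v ⬝ᵥ x) ^ 2 ≤ (v ⬝ᵥ N⁻¹ *ᵥ v) * (x ⬝ᵥ N *ᵥ x) := by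
  have hcancel : N *ᵥ N⁻¹ *ᵥ v = v := by
    rw [mulVec_mulVec, mul_nonsing_inv N ((isUnit_iff_isUnit_det N).1 hN.isUnit), one_mulVec]
  have cauchySchwarz := LinearMap.BilinForm.apply_mul_apply_le_of_forall_zero_le
    N.toBilin' (fun y ↦ by simpa [toBilin'_apply'] using hN.posSemidef.dotProduct_mulVec_nonneg y)
    x (N⁻¹ *ᵥ v)
  have hsymm : N⁻¹ *ᵥ v ⬝ᵥ N *ᵥ x = v ⬝ᵥ x := by
    rw [dotProduct_mulVec, ← mulVec_transpose, ← conjTranspose_eq_transpose_of_trivial,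
      hN.isHermitian.eq, hcancel]
  simp only [toBilin'_apply', hcancel, hsymm] at cauchySchwarz
  rwa [dotProduct_comm x v, dotProduct_comm _ v, ← sq, mul_comm] at cauchySchwarz

lemma posDef_add_smul_vecMulVec {N : Matrix n n ℝ} (hN : N.PosDef) {v : n → ℝ} {s : ℝ}
    (h : 0 < 1 + s * (v ⬝ᵥ N⁻¹ *ᵥ v)) : (N + s • vecMulVec v v).PosDef := by
  have hherm : (N + s • vecMulVec v v).IsHermitian := by
    refine hN.isHermitian.add ?_
    simp [IsHermitian]
  refine .of_dotProduct_mulVec_pos hherm fun x hx ↦ ?_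
  have hform : star x ⬝ᵥ (N + s • vecMulVec v v) *ᵥ x = x ⬝ᵥ N *ᵥ x + s * (v ⬝ᵥ x) ^ 2 := by
    simp [add_mulVec, smul_mulVec, vecMulVec_mulVec, dotProduct_comm x v, sq]
  have hNx : 0 < x ⬝ᵥ N *ᵥ x := by simpa using hN.dotProduct_mulVec_pos hx
  rw [hform]
  rcases le_or_gt 0 s with hs | hs
  · positivity
  · nlinarith [sq_dotProduct_le_mul_dotProduct_mulVec hN v x]

end PosDefUpdate

section Shift

variable {n 𝕜 : Type*} [Fintype n] [DecidableEq n] [RCLike 𝕜] {M : Matrix n n 𝕜}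

lemma add_smul_one_eq_conj_diagonal (hM : M.IsHermitian) (c : ℝ) :
    M + c • 1 = Unitary.conjStarAlgAut 𝕜 _ hM.eigenvectorUnitary
      (diagonal fun i ↦ ((hM.eigenvalues i + c : ℝ) : 𝕜)) := by
  have hdiag : (diagonal fun i ↦ ((hM.eigenvalues i + c : ℝ) : 𝕜)) =
      diagonal (RCLike.ofReal ∘ hM.eigenvalues) + (c : 𝕜) • 1 := by
    ext i j
    by_cases h : i = j <;> simp [h, Algebra.algebraMap_eq_smul_one, add_smul]
  rw [hdiag, map_add, ← hM.spectral_theorem, map_smul, map_one,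
    RCLike.real_smul_eq_coe_smul (K := 𝕜)]

open scoped ComplexOrder in
lemma posDef_add_smul_one_iff (hM : M.IsHermitian) {c : ℝ} :
    (M + c • 1).PosDef ↔ ∀ i, 0 < hM.eigenvalues i + c := by
  rw [add_smul_one_eq_conj_diagonal hM, Unitary.conjStarAlgAut_apply,
    Unitary.isUnit_coe.posDef_star_right_conjugate_iff]
  simp only [posDef_diagonal_iff, RCLike.ofReal_pos]

lemma inv_add_smul_one_eq_conj_diagonal (hM : M.IsHermitian) {c : ℝ}
    (hc : ∀ i, hM.eigenvalues i + c ≠ 0) :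
    (M + c • 1)⁻¹ = Unitary.conjStarAlgAut 𝕜 _ hM.eigenvectorUnitary
      (diagonal fun i ↦ (((hM.eigenvalues i + c)⁻¹ : ℝ) : 𝕜)) := by
  refine inv_eq_right_inv ?_
  rw [add_smul_one_eq_conj_diagonal hM, ← map_mul, diagonal_mul_diagonal]
  simp only [← RCLike.ofReal_mul, mul_inv_cancel₀ (hc _), diagonal_one, map_one]

lemma trace_inv_add_smul_one_pow (hM : M.IsHermitian) {c : ℝ}
    (hc : ∀ i, hM.eigenvalues i + c ≠ 0) (k : ℕ) :
    ((M + c • 1)⁻¹ ^ k).trace = ((∑ i, (hM.eigenvalues i + c)⁻¹ ^ k : ℝ) : 𝕜) := by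
  rw [inv_add_smul_one_eq_conj_diagonal hM hc, ← map_pow, diagonal_pow,
    Unitary.conjStarAlgAut_apply, trace_mul_cycle, Unitary.coe_star_mul_self, one_mul,
    trace_diagonal]
  simp

open scoped ComplexOrder in
lemma trace_inv_eq_sum_inv_eigenvalues (hM : M.PosDef) :
    M⁻¹.trace = ((∑ i, (hM.isHermitian.eigenvalues i)⁻¹ : ℝ) : 𝕜) := by
  simpa using trace_inv_add_smul_one_pow hM.isHermitian (c := 0)
    (fun i ↦ by simpa using (hM.eigenvalues_pos i).ne') 1

end Shift

section Scalar

variable {ι K : Type*} [Field K] [LinearOrder K] [IsStrictOrderedRing K]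
  {s : Finset ι} {x : ι → K} {δ : K}

lemma mul_sum_inv_add_sq_lt (hs : s.Nonempty) (hx : ∀ i ∈ s, 0 < x i) (hδ : 0 < δ) :
    δ * ∑ i ∈ s, (x i + δ)⁻¹ ^ 2 < ∑ i ∈ s, (x i)⁻¹ - ∑ i ∈ s, (x i + δ)⁻¹ := by
  rw [Finset.mul_sum, ← Finset.sum_sub_distrib]
  refine Finset.sum_lt_sum_of_nonempty hs fun i hi ↦ ?_
  have hi := hx i hi
  calc δ * (x i + δ)⁻¹ ^ 2 = δ * ((x i + δ)⁻¹ * (x i + δ)⁻¹) := by rw [sq]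
    _ < δ * ((x i)⁻¹ * (x i + δ)⁻¹) := by gcongr; linarith
    _ = (x i)⁻¹ - (x i + δ)⁻¹ := by field_simp; ring

lemma le_sum_inv_sub_sq (hx : ∀ i ∈ s, δ < x i) (hδ : 0 < δ) (h : (∑ i ∈ s, (x i)⁻¹) * δ ≤ 1) :
    (∑ i ∈ s, (x i - δ)⁻¹ - ∑ i ∈ s, (x i)⁻¹) / δ +
      (∑ i ∈ s, (x i - δ)⁻¹ - ∑ i ∈ s, (x i)⁻¹) ^ 2 ≤ ∑ i ∈ s, (x i - δ)⁻¹ ^ 2 := by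
  have hpos (i) (hi : i ∈ s) : 0 < (x i)⁻¹ := inv_pos.2 (hδ.trans (hx i hi))
  have hne (i) (hi : i ∈ s) : x i ≠ 0 ∧ x i - δ ≠ 0 :=
    ⟨(hδ.trans (hx i hi)).ne', (sub_pos.2 (hx i hi)).ne'⟩
  set p := ∑ i ∈ s, (x i)⁻¹ * (x i - δ)⁻¹ with hp
  set q := ∑ i ∈ s, (x i)⁻¹ * (x i - δ)⁻¹ ^ 2 with hq
  have hq0 : 0 ≤ q := Finset.sum_nonneg fun i hi ↦ mul_nonneg (hpos i hi).le (sq_nonneg _)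
  have cauchySchwarz : p ^ 2 ≤ (∑ i ∈ s, (x i)⁻¹) * q :=
    Finset.sum_sq_le_sum_mul_sum_of_sq_le_mul s (fun i hi ↦ (hpos i hi).le)
      (fun i hi ↦ mul_nonneg (hpos i hi).le (sq_nonneg _)) fun i _ ↦ by
        rw [mul_pow, sq (x i)⁻¹, mul_assoc]
  have hdiff : ∑ i ∈ s, (x i - δ)⁻¹ - ∑ i ∈ s, (x i)⁻¹ = δ * p := by
    rw [hp, Finset.mul_sum, ← Finset.sum_sub_distrib]
    refine Finset.sum_congr rfl fun i hi ↦ ?_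
    rw [inv_sub_inv (hne i hi).2 (hne i hi).1]
    field [(hne i hi).1, (hne i hi).2]
  have hsq : ∑ i ∈ s, (x i - δ)⁻¹ ^ 2 = p + δ * q := by
    rw [hp, hq, Finset.mul_sum, ← Finset.sum_add_distrib]
    refine Finset.sum_congr rfl fun i hi ↦ ?_
    field [(hne i hi).1, (hne i hi).2]
  rw [hdiff, hsq, mul_div_cancel_left₀ _ hδ.ne']
  gcongr
  calc (δ * p) ^ 2 ≤ δ ^ 2 * ((∑ i ∈ s, (x i)⁻¹) * q) := by rw [mul_pow]; gcongr
    _ = ((∑ i ∈ s, (x i)⁻¹) * δ) * (δ * q) := by ring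
    _ ≤ δ * q := mul_le_of_le_one_left (by positivity) h

end Scalar

section Potential

variable {n : Type*} [Fintype n] [DecidableEq n] {M : Matrix n n ℝ} {δ ε t : ℝ} {v : n → ℝ}

lemma mul_trace_inv_add_smul_one_sq_lt [Nonempty n] (hM : M.PosDef) (hδ : 0 < δ) :
    δ * ((M + δ • 1)⁻¹ ^ 2).trace < M⁻¹.trace - (M + δ • 1)⁻¹.trace := by
  have hne (i : n) : hM.isHermitian.eigenvalues i + δ ≠ 0 := by
    linarith [hM.eigenvalues_pos i]
  have htrace := trace_inv_add_smul_one_pow hM.isHermitian hne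
  rw [htrace, trace_inv_eq_sum_inv_eigenvalues hM, ← pow_one (M + δ • 1)⁻¹, htrace]
  simpa using mul_sum_inv_add_sq_lt Finset.univ_nonempty (fun i _ ↦ hM.eigenvalues_pos i) hδ

lemma lt_eigenvalues_of_trace_inv_mul_lt_one (hM : M.PosDef) (h : M⁻¹.trace * δ < 1) (i : n) :
    δ < hM.isHermitian.eigenvalues i := by
  have hpos := hM.eigenvalues_pos
  rw [trace_inv_eq_sum_inv_eigenvalues hM, RCLike.ofReal_real_eq_id, id_eq] at h
  by_contra! hle
  have hδ := (hpos i).trans_le hle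
  have hi : (hM.isHermitian.eigenvalues i)⁻¹ ≤ ∑ j, (hM.isHermitian.eigenvalues j)⁻¹ :=
    Finset.single_le_sum (f := fun j ↦ (hM.isHermitian.eigenvalues j)⁻¹)
      (fun j _ ↦ (inv_pos.2 (hpos j)).le) (Finset.mem_univ i)
  have hone_le : 1 ≤ (hM.isHermitian.eigenvalues i)⁻¹ * δ := by
    rwa [inv_mul_eq_div, one_le_div (hpos i)]
  nlinarith

lemma posDef_sub_smul_one (hM : M.PosDef) (h : M⁻¹.trace * δ < 1) : (M - δ • 1).PosDef := by
  rw [sub_eq_add_neg, ← neg_smul, posDef_add_smul_one_iff hM.isHermitian]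
  intro i
  linarith [lt_eigenvalues_of_trace_inv_mul_lt_one hM h i]

lemma trace_inv_sub_smul_one_pow (hM : M.PosDef) (h : M⁻¹.trace * δ < 1) (k : ℕ) :
    ((M - δ • 1)⁻¹ ^ k).trace = ∑ i, (hM.isHermitian.eigenvalues i - δ)⁻¹ ^ k := by
  have hne (i : n) : hM.isHermitian.eigenvalues i + -δ ≠ 0 := by
    linarith [lt_eigenvalues_of_trace_inv_mul_lt_one hM h i]
  simpa [sub_eq_add_neg] using trace_inv_add_smul_one_pow hM.isHermitian hne k

lemma le_trace_inv_sub_smul_one_sq (hM : M.PosDef) (hδ : 0 < δ) (h : M⁻¹.trace * δ < 1) :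
    ((M - δ • 1)⁻¹.trace - M⁻¹.trace) / δ + ((M - δ • 1)⁻¹.trace - M⁻¹.trace) ^ 2 ≤
      ((M - δ • 1)⁻¹ ^ 2).trace := by
  have hlt (i : n) (_ : i ∈ Finset.univ) := lt_eigenvalues_of_trace_inv_mul_lt_one hM h i
  have htrace := trace_inv_sub_smul_one_pow hM h
  rw [htrace, ← pow_one (M - δ • 1)⁻¹, htrace]
  rw [trace_inv_eq_sum_inv_eigenvalues hM, RCLike.ofReal_real_eq_id, id_eq] at h ⊢
  simpa using le_sum_inv_sub_sq hlt hδ h.le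

lemma trace_inv_lt_trace_inv_sub_smul_one [Nonempty n] (hM : M.PosDef) (hδ : 0 < δ)
    (h : M⁻¹.trace * δ < 1) : M⁻¹.trace < (M - δ • 1)⁻¹.trace := by
  have hlt := lt_eigenvalues_of_trace_inv_mul_lt_one hM h
  rw [← pow_one (M - δ • 1)⁻¹, trace_inv_sub_smul_one_pow hM h,
    trace_inv_eq_sum_inv_eigenvalues hM]
  refine Finset.sum_lt_sum_of_nonempty Finset.univ_nonempty fun i _ ↦ ?_
  rw [pow_one]
  exact inv_strictAnti₀ (sub_pos.2 (hlt i)) (by linarith)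

/-- The invariant of the barrier argument: `M` is positive definite and the barrier potential
`tr M⁻¹` is at most `ε`. It is maintained for `M = u • 1 - A` with the upper barrier `u` and for
`M = A - l • 1` with the lower barrier `l`. -/
structure PotentialLE (M : Matrix n n ℝ) (ε : ℝ) : Prop where
  posDef : M.PosDef
  trace_inv_le : M⁻¹.trace ≤ ε

lemma potentialLE_smul_one {c : ℝ} (hc : 0 < c) :
    PotentialLE (c • (1 : Matrix n n ℝ)) (Fintype.card n / c) where
  posDef := PosDef.one.smul hc
  trace_inv_le := by
    have hinv : (c • (1 : Matrix n n ℝ))⁻¹ = c⁻¹ • 1 :=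
      inv_eq_right_inv (by simp [smul_smul, hc.ne'])
    rw [hinv, trace_smul, trace_one, smul_eq_mul, inv_mul_eq_div]

lemma potentialLE_add_smul_vecMulVec {s : ℝ} (hM : M.PosDef)
    (hpos : 0 < 1 + s * (v ⬝ᵥ M⁻¹ *ᵥ v))
    (h : M⁻¹.trace - s * (v ⬝ᵥ M⁻¹ ^ 2 *ᵥ v) / (1 + s * (v ⬝ᵥ M⁻¹ *ᵥ v)) ≤ ε) :
    PotentialLE (M + s • vecMulVec v v) ε where
  posDef := posDef_add_smul_vecMulVec hM hpos
  trace_inv_le := by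
    have hsmul : v ⬝ᵥ M⁻¹ *ᵥ (s • v) = s * (v ⬝ᵥ M⁻¹ *ᵥ v) := by simp [mulVec_smul]
    rw [← smul_vecMulVec, trace_inv_add_vecMulVec hM.isUnit (by rw [hsmul]; exact hpos.ne'), hsmul]
    simpa [mulVec_smul] using h

/-- The quantity `U_A(v)` of Batson, Spielman and Srivastava, written in terms of `M = u • 1 - A`:
after the upper barrier moves up by `δ`, adding `t • v vᵀ` to `A` keeps the potential from growing
as soon as `t * upperCost M δ v < 1`. -/
noncomputable def upperCost (M : Matrix n n ℝ) (δ : ℝ) (v : n → ℝ) : ℝ :=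
  (v ⬝ᵥ (M + δ • 1)⁻¹ ^ 2 *ᵥ v) / (M⁻¹.trace - (M + δ • 1)⁻¹.trace) + v ⬝ᵥ (M + δ • 1)⁻¹ *ᵥ v

/-- The quantity `L_A(v)` of Batson, Spielman and Srivastava, written in terms of `M = A - l • 1`:
after the lower barrier moves up by `δ`, adding `t • v vᵀ` to `A` keeps the potential from growing
as soon as `1 ≤ t * lowerGain M δ v`. -/
noncomputable def lowerGain (M : Matrix n n ℝ) (δ : ℝ) (v : n → ℝ) : ℝ :=
  (v ⬝ᵥ (M - δ • 1)⁻¹ ^ 2 *ᵥ v) / ((M - δ • 1)⁻¹.trace - M⁻¹.trace) - v ⬝ᵥ (M - δ • 1)⁻¹ *ᵥ v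

lemma dotProduct_inv_pow_mulVec_nonneg {N : Matrix n n ℝ} (hN : N.PosDef) (v : n → ℝ) (k : ℕ) :
    0 ≤ v ⬝ᵥ N⁻¹ ^ k *ᵥ v := by
  simpa using (hN.inv.posSemidef.pow k).dotProduct_mulVec_nonneg v

lemma trace_inv_add_smul_one_lt [Nonempty n] (hM : M.PosDef) (hδ : 0 < δ) :
    (M + δ • 1)⁻¹.trace < M⁻¹.trace := by
  have h : 0 ≤ ((M + δ • 1)⁻¹ ^ 2).trace :=
    ((hM.add (PosDef.one.smul hδ)).inv.posSemidef.pow 2).trace_nonneg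
  nlinarith [mul_trace_inv_add_smul_one_sq_lt hM hδ]

lemma upperCost_nonneg [Nonempty n] (hM : M.PosDef) (hδ : 0 < δ) (v : n → ℝ) :
    0 ≤ upperCost M δ v := by
  have hN := hM.add (PosDef.one.smul hδ)
  have hdrop := sub_pos.2 (trace_inv_add_smul_one_lt hM hδ)
  have hlinear := dotProduct_inv_pow_mulVec_nonneg hN v 1
  rw [pow_one] at hlinear
  exact add_nonneg (div_nonneg (dotProduct_inv_pow_mulVec_nonneg hN v 2) hdrop.le) hlinear

lemma PotentialLE.add_smul_one_sub [Nonempty n] (hM : PotentialLE M ε) (hδ : 0 < δ) (ht : 0 ≤ t)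
    (h : t * upperCost M δ v < 1) : PotentialLE (M + δ • 1 - t • vecMulVec v v) ε := by
  have hN := hM.posDef.add (PosDef.one.smul hδ)
  have hdrop := sub_pos.2 (trace_inv_add_smul_one_lt hM.posDef hδ)
  have ha := dotProduct_inv_pow_mulVec_nonneg hN v 2
  rw [upperCost, mul_add, ← mul_div_assoc] at h
  set drop := M⁻¹.trace - (M + δ • 1)⁻¹.trace
  set a := v ⬝ᵥ (M + δ • 1)⁻¹ ^ 2 *ᵥ v
  set b := v ⬝ᵥ (M + δ • 1)⁻¹ *ᵥ v
  have hpos : 0 < 1 + -t * b := by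
    have : 0 ≤ t * a / drop := by positivity
    linarith
  have hincrease : t * a / (1 + -t * b) ≤ drop := by
    rw [div_le_comm₀ hpos hdrop]
    linarith
  rw [sub_eq_add_neg, ← neg_smul]
  refine potentialLE_add_smul_vecMulVec hN hpos ?_
  rw [neg_mul t a, neg_div]
  linarith [hM.trace_inv_le]

lemma PotentialLE.sub_smul_one_add [Nonempty n] (hM : PotentialLE M ε) (hδ : 0 < δ)
    (hε : ε * δ < 1) (ht : 0 ≤ t) (h : 1 ≤ t * lowerGain M δ v) :
    PotentialLE (M - δ • 1 + t • vecMulVec v v) ε := by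
  have htrace : M⁻¹.trace * δ < 1 := by nlinarith [hM.trace_inv_le]
  have hN := posDef_sub_smul_one hM.posDef htrace
  have hrise := sub_pos.2 (trace_inv_lt_trace_inv_sub_smul_one hM.posDef hδ htrace)
  have hb := dotProduct_inv_pow_mulVec_nonneg hN v 1
  rw [pow_one] at hb
  rw [lowerGain, mul_sub, ← mul_div_assoc] at h
  set rise := (M - δ • 1)⁻¹.trace - M⁻¹.trace
  set a := v ⬝ᵥ (M - δ • 1)⁻¹ ^ 2 *ᵥ v
  set b := v ⬝ᵥ (M - δ • 1)⁻¹ *ᵥ v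
  have hpos : 0 < 1 + t * b := by positivity
  have hdecrease : rise ≤ t * a / (1 + t * b) := by
    rw [le_div_comm₀ hrise hpos]
    linarith
  exact potentialLE_add_smul_vecMulVec hN hpos (by linarith [hM.trace_inv_le])

end Potential

section Selection

variable {ι n : Type*} [Fintype ι] [Fintype n] [DecidableEq n] {V : Matrix ι n ℝ}
  {M L : Matrix n n ℝ} {δ ε δU δL εU εL : ℝ}

lemma sum_dotProduct_mulVec_row {R : Type*} [CommRing R] {V : Matrix ι n R} (hV : Vᵀ * V = 1)
    (B : Matrix n n R) : ∑ i, V i ⬝ᵥ B *ᵥ V i = B.trace := by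
  calc ∑ i, V i ⬝ᵥ B *ᵥ V i = (V * (B * Vᵀ)).trace := rfl
    _ = B.trace := by rw [trace_mul_comm, Matrix.mul_assoc, hV, Matrix.mul_one]

lemma sum_upperCost_lt [Nonempty n] (hV : Vᵀ * V = 1) (hM : PotentialLE M ε) (hδ : 0 < δ) :
    ∑ i, upperCost M δ (V i) < δ⁻¹ + ε := by
  have hdrop := sub_pos.2 (trace_inv_add_smul_one_lt hM.posDef hδ)
  have hratio : ((M + δ • 1)⁻¹ ^ 2).trace / (M⁻¹.trace - (M + δ • 1)⁻¹.trace) < δ⁻¹ := by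
    rw [div_lt_iff₀ hdrop, ← div_eq_inv_mul, lt_div_iff₀' hδ]
    exact mul_trace_inv_add_smul_one_sq_lt hM.posDef hδ
  simp only [upperCost, Finset.sum_add_distrib, ← Finset.sum_div, sum_dotProduct_mulVec_row hV]
  linarith [hM.trace_inv_le]

lemma le_sum_lowerGain [Nonempty n] (hV : Vᵀ * V = 1) (hM : PotentialLE M ε) (hδ : 0 < δ)
    (hε : ε * δ < 1) : δ⁻¹ - ε ≤ ∑ i, lowerGain M δ (V i) := by
  have htrace : M⁻¹.trace * δ < 1 := by nlinarith [hM.trace_inv_le]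
  have hrise := sub_pos.2 (trace_inv_lt_trace_inv_sub_smul_one hM.posDef hδ htrace)
  have hratio : δ⁻¹ + ((M - δ • 1)⁻¹.trace - M⁻¹.trace) ≤
      ((M - δ • 1)⁻¹ ^ 2).trace / ((M - δ • 1)⁻¹.trace - M⁻¹.trace) := by
    rw [le_div_iff₀ hrise, add_mul, ← div_eq_inv_mul, ← sq]
    exact le_trace_inv_sub_smul_one_sq hM.posDef hδ htrace
  simp only [lowerGain, Finset.sum_sub_distrib, ← Finset.sum_div, sum_dotProduct_mulVec_row hV]
  linarith [hM.trace_inv_le]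

lemma exists_potentialLE_update [Nonempty n] (hV : Vᵀ * V = 1) (hU : PotentialLE M εU)
    (hL : PotentialLE L εL) (hδU : 0 < δU) (hδL : 0 < δL) (hεL : εL * δL < 1)
    (hbalance : δU⁻¹ + εU ≤ δL⁻¹ - εL) :
    ∃ (i : ι) (t : ℝ), 0 < t ∧ PotentialLE (M + δU • 1 - t • vecMulVec (V i) (V i)) εU ∧
      PotentialLE (L - δL • 1 + t • vecMulVec (V i) (V i)) εL := by
  obtain ⟨i, -, hlt⟩ : ∃ i ∈ Finset.univ, upperCost M δU (V i) < lowerGain L δL (V i) :=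
    Finset.exists_lt_of_sum_lt <| (sum_upperCost_lt hV hU hδU).trans_le <|
      hbalance.trans (le_sum_lowerGain hV hL hδL hεL)
  have hgain : 0 < lowerGain L δL (V i) := (upperCost_nonneg hU.posDef hδU _).trans_lt hlt
  refine ⟨i, (lowerGain L δL (V i))⁻¹, inv_pos.2 hgain,
    hU.add_smul_one_sub hδU (inv_nonneg.2 hgain.le) ?_,
    hL.sub_smul_one_add hδL hεL (inv_nonneg.2 hgain.le) (inv_mul_cancel₀ hgain.ne').ge⟩
  rwa [inv_mul_lt_one₀ hgain]

/-- The Gram matrix `∑ t, s t • v_t v_tᵀ` of the vectors `v t` with weights `s t`, the matrix built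
up one summand at a time by the barrier argument. -/
def weightedGram {κ n R : Type*} [Fintype κ] [CommSemiring R]
    (v : κ → n → R) (s : κ → R) : Matrix n n R :=
  ∑ t, s t • vecMulVec (v t) (v t)

lemma weightedGram_vecCons {ι n R : Type*} [CommSemiring R] {k : ℕ} (V : Matrix ι n R)
    (i : ι) (idx : Fin k → ι) (t : R) (s : Fin k → R) :
    weightedGram (fun j ↦ V (vecCons i idx j)) (vecCons t s) =
      t • vecMulVec (V i) (V i) + weightedGram (fun j ↦ V (idx j)) s := by
  simp [weightedGram, Fin.sum_univ_succ]

lemma dotProduct_weightedGram_mulVec {κ n R : Type*} [Fintype κ] [Fintype n] [CommSemiring R]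
    (v : κ → n → R) (s : κ → R) (y : n → R) :
    y ⬝ᵥ weightedGram v s *ᵥ y = ∑ t, s t * (v t ⬝ᵥ y) ^ 2 := by
  rw [weightedGram, sum_mulVec, dotProduct_sum]
  refine Finset.sum_congr rfl fun t _ ↦ ?_
  simp only [smul_mulVec, vecMulVec_mulVec, op_smul_eq_smul, dotProduct_smul, smul_eq_mul, sq,
    dotProduct_comm y (v t)]

lemma exists_potentialLE_weightedGram [Nonempty n] (hV : Vᵀ * V = 1) (hU : PotentialLE M εU)
    (hL : PotentialLE L εL) (hδU : 0 < δU) (hδL : 0 < δL) (hεL : εL * δL < 1)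
    (hbalance : δU⁻¹ + εU ≤ δL⁻¹ - εL) (k : ℕ) :
    ∃ (idx : Fin k → ι) (s : Fin k → ℝ), (∀ t, 0 < s t) ∧
      PotentialLE (M + (k * δU) • 1 - weightedGram (fun t ↦ V (idx t)) s) εU ∧
      PotentialLE (L - (k * δL) • 1 + weightedGram (fun t ↦ V (idx t)) s) εL := by
  induction k with
  | zero =>
    exact ⟨Fin.elim0, Fin.elim0, fun t ↦ t.elim0, by simpa [weightedGram],
      by simpa [weightedGram]⟩
  | succ k ih =>
    obtain ⟨idx, s, hs, hUk, hLk⟩ := ih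
    obtain ⟨i, t, ht, hU_succ, hL_succ⟩ :=
      exists_potentialLE_update hV hUk hLk hδU hδL hεL hbalance
    refine ⟨vecCons i idx, vecCons t s, Fin.cases ht hs, ?_, ?_⟩
    · convert hU_succ using 1
      rw [weightedGram_vecCons]
      push_cast
      module
    · convert hL_succ using 1
      rw [weightedGram_vecCons]
      push_cast
      module

theorem exists_weightedGram_between [Nonempty n] (hV : Vᵀ * V = 1) {r : ℕ}
    (hr : Fintype.card n < r) :
    ∃ (idx : Fin r → ι) (s : Fin r → ℝ), (∀ t, 0 < s t) ∧
      (weightedGram (fun t ↦ V (idx t)) s -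
        ((1 - √((Fintype.card n : ℝ) / r)) ^ 2) • (1 : Matrix n n ℝ)).PosDef ∧
      (((1 + √((Fintype.card n : ℝ) / r)) ^ 2) • (1 : Matrix n n ℝ) -
        weightedGram (fun t ↦ V (idx t)) s).PosDef := by
  have hn : (0 : ℝ) < Fintype.card n := mod_cast Fintype.card_pos
  have hcard_lt : (Fintype.card n : ℝ) < r := mod_cast hr
  have hr0 : (0 : ℝ) < r := hn.trans hcard_lt
  set ρ := √((Fintype.card n : ℝ) / r) with hρ
  have hρ0 : 0 < ρ := by positivity
  have hρ1 : 0 < 1 - ρ := by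
    rw [sub_pos, hρ, Real.sqrt_lt' one_pos, one_pow, div_lt_one hr0]
    exact hcard_lt
  have hcard : (Fintype.card n : ℝ) = ρ ^ 2 * r := by
    rw [hρ, Real.sq_sqrt (by positivity), div_mul_cancel₀ _ hr0.ne']
  -- The starting barriers `ρ * (1 + ρ)` and `-ρ * (1 - ρ)` give potentials `r * ρ / (1 ± ρ)`, so
  -- that both sides of the balance condition equal `r`.
  obtain ⟨idx, s, hs, hU, hL⟩ := exists_potentialLE_weightedGram hV
    (potentialLE_smul_one (n := n) (c := ρ * (1 + ρ)) (by positivity))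
    (potentialLE_smul_one (n := n) (c := ρ * (1 - ρ)) (by positivity))
    (δU := (1 + ρ) / r) (δL := (1 - ρ) / r) (by positivity) (by positivity)
    (by rw [hcard]; field_simp; linarith) (by rw [hcard]; field_simp; linarith) r
  refine ⟨idx, s, hs, ?_, ?_⟩
  · convert hL.posDef using 1
    rw [mul_div_cancel₀ _ hr0.ne']
    module
  · convert hU.posDef using 1
    rw [mul_div_cancel₀ _ hr0.ne']
    module

end Selection

/-- The sampling-and-rescaling matrix whose column `t` is `w t • e_{idx t}`. -/
def samplingMatrix {ι κ R : Type*} [DecidableEq ι] [MulZeroOneClass R]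
    (idx : κ → ι) (w : κ → R) : Matrix ι κ R :=
  of fun i t ↦ w t * if i = idx t then 1 else 0

lemma samplingMatrix_transpose_mulVec {ι κ R : Type*} [Fintype ι] [DecidableEq ι] [CommSemiring R]
    (idx : κ → ι) (w : κ → R) (x : ι → R) (t : κ) :
    ((samplingMatrix idx w)ᵀ *ᵥ x) t = w t * x (idx t) := by
  simp [samplingMatrix, mulVec, dotProduct]

lemma isSamplingRescaling_samplingMatrix {d r : ℕ} (idx : Fin r → Fin d) {w : Fin r → ℝ}
    (hw : ∀ t, 0 < w t) : IsSamplingRescaling (samplingMatrix idx w) :=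
  ⟨idx, w, hw, fun _ _ ↦ rfl⟩

lemma euclNorm_sq {m : ℕ} (x : Fin m → ℝ) : euclNorm x ^ 2 = ∑ i, x i ^ 2 :=
  Real.sq_sqrt (Finset.sum_nonneg fun i _ ↦ sq_nonneg (x i))

lemma euclNorm_mulVec_sq {d m : ℕ} {V : Matrix (Fin d) (Fin m) ℝ} (hV : Vᵀ * V = 1)
    (y : Fin m → ℝ) : euclNorm (V *ᵥ y) ^ 2 = y ⬝ᵥ y := by
  rw [euclNorm_sq]
  calc ∑ i, (V *ᵥ y) i ^ 2 = V *ᵥ y ⬝ᵥ V *ᵥ y := by simp only [dotProduct, sq]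
    _ = y ⬝ᵥ y := by rw [dotProduct_mulVec, ← mulVec_transpose, mulVec_mulVec, hV, one_mulVec]

lemma euclNorm_samplingMatrix_transpose_mulVec_sq {d m r : ℕ} (V : Matrix (Fin d) (Fin m) ℝ)
    (idx : Fin r → Fin d) {s : Fin r → ℝ} (hs : ∀ t, 0 ≤ s t) (y : Fin m → ℝ) :
    euclNorm ((samplingMatrix idx fun t ↦ √(s t))ᵀ *ᵥ (V *ᵥ y)) ^ 2 =
      y ⬝ᵥ weightedGram (fun t ↦ V (idx t)) s *ᵥ y := by
  rw [euclNorm_sq, dotProduct_weightedGram_mulVec]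
  refine Finset.sum_congr rfl fun t _ ↦ ?_
  rw [samplingMatrix_transpose_mulVec, mul_pow, Real.sq_sqrt (hs t), mulVec]

end SpectralSparsification

open SpectralSparsification in
/-- **BSS single-set spectral sparsification (Lemma 1).**
For `V ∈ ℝ^{d×ℓ}` with orthonormal columns and `r > ℓ`, there is a
sampling-and-rescaling matrix `R ∈ ℝ^{d×r}` such that for all `y ∈ ℝ^ℓ`,
`(1 − √(ℓ/r))² ‖Vy‖² ≤ ‖Rᵀ V y‖² ≤ (1 + √(ℓ/r))² ‖Vy‖²`. -/
theorem bss_spectral_sparsification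
    (ℓ r d : ℕ) (hℓ : 0 < ℓ) (hr : 0 < r) (hd : 0 < d) (hrℓ : ℓ < r)
    (V : Matrix (Fin d) (Fin ℓ) ℝ) (hV : Vᵀ * V = 1) :
    ∃ R : Matrix (Fin d) (Fin r) ℝ, IsSamplingRescaling R ∧
      ∀ y : Fin ℓ → ℝ,
        (1 - Real.sqrt ((ℓ : ℝ) / r)) ^ 2 * euclNorm (V.mulVec y) ^ 2
            ≤ euclNorm (Rᵀ.mulVec (V.mulVec y)) ^ 2 ∧
        euclNorm (Rᵀ.mulVec (V.mulVec y)) ^ 2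
            ≤ (1 + Real.sqrt ((ℓ : ℝ) / r)) ^ 2 * euclNorm (V.mulVec y) ^ 2 := by
  have : Nonempty (Fin ℓ) := Fin.pos_iff_nonempty.1 hℓ
  obtain ⟨idx, s, hs, hlower, hupper⟩ := exists_weightedGram_between hV
    (r := r) (by rwa [Fintype.card_fin])
  refine ⟨samplingMatrix idx fun t ↦ √(s t),
    isSamplingRescaling_samplingMatrix idx fun t ↦ Real.sqrt_pos.2 (hs t), fun y ↦ ?_⟩
  rw [euclNorm_mulVec_sq hV, euclNorm_samplingMatrix_transpose_mulVec_sq V idx fun t ↦ (hs t).le]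
  have hlower_y := hlower.posSemidef.dotProduct_mulVec_nonneg y
  have hupper_y := hupper.posSemidef.dotProduct_mulVec_nonneg y
  simp only [Fintype.card_fin, star_trivial, sub_mulVec, dotProduct_sub, smul_mulVec, one_mulVec,
    dotProduct_smul, smul_eq_mul, sub_nonneg] at hlower_y hupper_y
  exact ⟨hlower_y, hupper_y⟩
end

section
/- Let ℓ, r, d be positive integers with r > ℓ, and let V ∈ ℝ^{d×ℓ} satisfy V^T V = I_ℓ. Then there exists a sampling-and-rescaling matrix R ∈ ℝ^{d×r} such that ‖V^T V − V^T R R^T V‖₂ = ‖I_ℓ − V^T R R^T V‖₂ ≤ 3√(ℓ/r). -/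
open Matrix

/-- Spectral norm (ℓ₂ operator norm) of a real matrix: the supremum of `‖A x‖₂`
over unit vectors `x`. -/
noncomputable def specNorm {m n : ℕ} (A : Matrix (Fin m) (Fin n) ℝ) : ℝ :=
  sSup {c : ℝ | ∃ x : Fin n → ℝ, euclNorm x = 1 ∧ c = euclNorm (A.mulVec x)}

/-!
The proof is the barrier argument of Batson, Spielman and Srivastava. Sampled rows `v` of `V` are
added one at a time to `A = ∑ₜ s t • vₜ vₜᵀ`, keeping the spectrum of `A` between a lower barrier
`l` and an upper barrier `u` while the potentials `tr (u • 1 - A)⁻¹` and `tr (A - l • 1)⁻¹` stay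
bounded. After both barriers are shifted, adding `s • v vᵀ` restores the potentials as soon as `s⁻¹`
lies between an upper cost and a lower gain of `v`. Since `Vᵀ * V = 1`, summing over the rows turns
these quantities into traces, which shows that the total cost is less than the total gain, so some
row works. With `e = √(ℓ / r)`, after `r` steps the spectrum of `A` lies in
`((1 - e) ^ 2, (1 + e) ^ 2)`, and `(1 + e) ^ 2 - 1 ≤ 3 * e`.
-/

section RankOneUpdate

variable {κ 𝕜 : Type*} [Fintype κ] [DecidableEq κ]

lemma inv_add_vecMulVec [Field 𝕜] {M : Matrix κ κ 𝕜} (hM : IsUnit M) {u v : κ → 𝕜}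
    (h : 1 + v ⬝ᵥ (M⁻¹ *ᵥ u) ≠ 0) :
    (M + vecMulVec u v)⁻¹ =
      M⁻¹ - (1 + v ⬝ᵥ (M⁻¹ *ᵥ u))⁻¹ • vecMulVec (M⁻¹ *ᵥ u) (v ᵥ* M⁻¹) := by
  have hdet : IsUnit M.det := (isUnit_iff_isUnit_det M).mp hM
  have hself (X : Matrix κ κ 𝕜) (q : 𝕜) : X + q • X = (1 + q) • X := by rw [add_smul, one_smul]
  refine inv_eq_left_inv ?_
  rw [sub_mul, mul_add, mul_add, nonsing_inv_mul _ hdet, smul_mul_assoc, smul_mul_assoc,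
    vecMulVec_mul, vecMulVec_mul, vecMul_vecMul, nonsing_inv_mul _ hdet, vecMul_one,
    vecMul_vecMulVec, mul_vecMulVec, ← dotProduct_mulVec, vecMulVec_smul, ← smul_add, hself,
    smul_smul, inv_mul_cancel₀ h, one_smul, add_sub_cancel_right]

lemma trace_inv_add_smul_vecMulVec [Field 𝕜] {M : Matrix κ κ 𝕜} (hM : IsUnit M) {v : κ → 𝕜}
    {t : 𝕜} (h : 1 + t * (v ⬝ᵥ (M⁻¹ *ᵥ v)) ≠ 0) :
    (M + t • vecMulVec v v)⁻¹.trace =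
      M⁻¹.trace - t * (v ⬝ᵥ ((M⁻¹ * M⁻¹) *ᵥ v)) / (1 + t * (v ⬝ᵥ (M⁻¹ *ᵥ v))) := by
  have hq : v ⬝ᵥ (M⁻¹ *ᵥ (t • v)) = t * (v ⬝ᵥ (M⁻¹ *ᵥ v)) := by
    rw [mulVec_smul, dotProduct_smul, smul_eq_mul]
  rw [← smul_vecMulVec, inv_add_vecMulVec hM (by rwa [hq]), hq, trace_sub, trace_smul,
    trace_vecMulVec, mulVec_smul, smul_dotProduct, dotProduct_comm (M⁻¹ *ᵥ v) (v ᵥ* M⁻¹),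
    ← dotProduct_mulVec, mulVec_mulVec, smul_eq_mul, smul_eq_mul, inv_mul_eq_div]

lemma posDef_add_smul_vecMulVec {M : Matrix κ κ ℝ} (hM : M.PosDef) {v : κ → ℝ} {t : ℝ}
    (h : 0 < 1 + t * (v ⬝ᵥ (M⁻¹ *ᵥ v))) : (M + t • vecMulVec v v).PosDef := by
  have hsymm : Mᵀ = M := hM.isHermitian
  refine .of_dotProduct_mulVec_pos
    (IsHermitian.add hM.isHermitian (by simp [IsSymm, transpose_vecMulVec])) fun x hx => ?_
  set w := M⁻¹ *ᵥ v with hw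
  have hMw : M *ᵥ w = v := by
    rw [hw, mulVec_mulVec, mul_nonsing_inv _ ((isUnit_iff_isUnit_det M).mp hM.isUnit), one_mulVec]
  have hwMx : w ⬝ᵥ (M *ᵥ x) = v ⬝ᵥ x := by
    rw [dotProduct_mulVec, ← mulVec_transpose, hsymm, hMw]
  have hMx : 0 < x ⬝ᵥ (M *ᵥ x) := hM.dotProduct_mulVec_pos hx
  have hsq : 0 ≤ (x + (t * (v ⬝ᵥ x)) • w) ⬝ᵥ (M *ᵥ (x + (t * (v ⬝ᵥ x)) • w)) :=
    hM.posSemidef.dotProduct_mulVec_nonneg _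
  have hquad : star x ⬝ᵥ ((M + t • vecMulVec v v) *ᵥ x) =
      x ⬝ᵥ (M *ᵥ x) + t * (v ⬝ᵥ x) ^ 2 := by
    simp only [star_trivial, add_mulVec, smul_mulVec, vecMulVec_mulVec, op_smul_eq_smul,
      dotProduct_add, dotProduct_smul, smul_eq_mul, dotProduct_comm x v]
    ring
  simp only [mulVec_add, mulVec_smul, hMw, add_dotProduct, dotProduct_add, smul_dotProduct,
    dotProduct_smul, smul_eq_mul, hwMx, dotProduct_comm x v, dotProduct_comm w v] at hsq
  rw [hquad]
  rcases le_or_gt 0 t with ht | ht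
  · positivity
  · rcases eq_or_ne (v ⬝ᵥ x) 0 with hvx | hvx
    · simpa [hvx] using hMx
    · have hnt : 0 < -t := neg_pos.mpr ht
      have hpos : 0 < -t * (v ⬝ᵥ x) ^ 2 * (1 + t * (v ⬝ᵥ w)) := by positivity
      linarith

end RankOneUpdate

section Trace

variable {ι κ : Type*} [Fintype ι] [Fintype κ] [DecidableEq κ]

lemma sum_row_dotProduct_mulVec_row {R : Type*} [CommSemiring R] {V : Matrix ι κ R}
    (hV : Vᵀ * V = 1) (X : Matrix κ κ R) : ∑ i, V i ⬝ᵥ (X *ᵥ V i) = X.trace := by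
  calc ∑ i, V i ⬝ᵥ (X *ᵥ V i) = (V * X * Vᵀ).trace := by
        refine Finset.sum_congr rfl fun i _ => ?_
        rw [dotProduct_mulVec]
        rfl
    _ = X.trace := by rw [Matrix.mul_assoc, trace_mul_comm, Matrix.mul_assoc, hV, mul_one]

omit [DecidableEq κ] in
lemma sq_trace_mul_le {D : Matrix κ κ ℝ} (hD : D.PosSemidef) (X : Matrix κ κ ℝ) :
    (D * X).trace ^ 2 ≤ D.trace * (Xᵀ * D * X).trace := by
  classical
  have hsymm : (Xᵀ * D).trace = (D * X).trace := by
    rw [← trace_transpose, transpose_mul, transpose_transpose, show Dᵀ = D from hD.isHermitian]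
  have hnonneg (y : ℝ) :
      0 ≤ D.trace * (y * y) + 2 * (D * X).trace * y + (Xᵀ * D * X).trace := by
    have h := (hD.conjTranspose_mul_mul_same (y • 1 + X)).trace_nonneg
    simp only [conjTranspose_eq_transpose_of_trivial, transpose_add, transpose_smul,
      transpose_one, add_mul, mul_add, smul_mul_assoc, mul_smul_comm, one_mul, mul_one,
      trace_add, trace_smul, smul_eq_mul, hsymm] at h
    linarith
  have h := discrim_le_zero hnonneg
  rw [discrim] at h
  linarith

omit [DecidableEq κ] in
lemma posSemidef_mul_self {A : Matrix κ κ ℝ} (hA : A.IsHermitian) : (A * A).PosSemidef := by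
  simpa only [hA.eq] using posSemidef_conjTranspose_mul_self A

lemma posSemidef_trace_smul_one_sub {X : Matrix κ κ ℝ} (hX : X.PosSemidef) :
    (X.trace • 1 - X).PosSemidef := by
  obtain ⟨m, v, rfl⟩ := posSemidef_iff_eq_sum_vecMulVec.mp hX
  rw [trace_sum, Finset.sum_smul, ← Finset.sum_sub_distrib]
  refine posSemidef_sum _ fun i _ => ?_
  refine .of_dotProduct_mulVec_nonneg
    (by simp [IsSymm, transpose_vecMulVec]) fun x => ?_
  have hcs : (x ⬝ᵥ v i) ^ 2 ≤ (x ⬝ᵥ x) * (v i ⬝ᵥ v i) := by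
    simpa only [dotProduct, sq] using Finset.sum_mul_sq_le_sq_mul_sq Finset.univ x (v i)
  simp only [star_trivial, trace_vecMulVec, sub_mulVec, smul_mulVec, one_mulVec, vecMulVec_mulVec,
    op_smul_eq_smul, dotProduct_sub, dotProduct_smul, smul_eq_mul, dotProduct_comm (v i) x]
  linarith

end Trace

section Shift

variable {κ : Type*} [Fintype κ] [DecidableEq κ]

lemma inv_sub_inv_of_sub_eq_smul_one {R : Type*} [CommRing R] {P Q : Matrix κ κ R}
    (hP : IsUnit P) (hQ : IsUnit Q) {c : R} (h : Q - P = c • 1) :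
    P⁻¹ - Q⁻¹ = c • (P⁻¹ * Q⁻¹) := by
  rw [Matrix.inv_sub_inv (iff_of_true hP hQ), h, mul_smul_comm, mul_one, smul_mul_assoc]

-- The resolvent identity, applied twice.
lemma inv_sub_inv_eq_smul_sq_add {R : Type*} [CommRing R] {P Q : Matrix κ κ R}
    (hP : IsUnit P) (hQ : IsUnit Q) {c : R} (h : Q - P = c • 1) :
    P⁻¹ - Q⁻¹ = c • (Q⁻¹ * Q⁻¹) + c ^ 2 • (Q⁻¹ * P⁻¹ * Q⁻¹) := by
  have hPQ : P⁻¹ = Q⁻¹ + c • (Q⁻¹ * P⁻¹) := by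
    have := inv_sub_inv_of_sub_eq_smul_one hQ hP (c := -c) (by rw [← neg_sub, h, neg_smul])
    rw [neg_smul] at this
    rw [← sub_eq_iff_eq_add', ← neg_sub, this, neg_neg]
  calc P⁻¹ - Q⁻¹ = c • (P⁻¹ * Q⁻¹) := inv_sub_inv_of_sub_eq_smul_one hP hQ h
    _ = c • ((Q⁻¹ + c • (Q⁻¹ * P⁻¹)) * Q⁻¹) := by rw [← hPQ]
    _ = c • (Q⁻¹ * Q⁻¹) + c ^ 2 • (Q⁻¹ * P⁻¹ * Q⁻¹) := by
      rw [add_mul, smul_mul_assoc, smul_add, smul_smul, sq]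

lemma posDef_sub_smul_one {L : Matrix κ κ ℝ} (hL : L.PosDef) {c : ℝ} (hc : 0 < c)
    (h : c * L⁻¹.trace < 1) : (L - c • 1).PosDef := by
  have hdet : IsUnit L.det := (isUnit_iff_isUnit_det L).mp hL.isUnit
  have hinv : (1 - c • L⁻¹).PosDef := by
    have := (PosDef.one.smul (sub_pos.mpr h)).add_posSemidef
      ((posSemidef_trace_smul_one_sub hL.inv.posSemidef).smul hc.le)
    convert this using 1
    module
  have hsymm : (L - c • 1)ᴴ = L - c • 1 :=
    (hL.isHermitian.sub (by simp [IsSymm])).eq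
  have hdecomp : L - c • 1 = c • (1 - c • L⁻¹) + (L - c • 1)ᴴ * L⁻¹ * (L - c • 1) := by
    rw [hsymm, sub_mul, mul_nonsing_inv _ hdet, mul_sub, sub_mul, one_mul, smul_mul_assoc,
      smul_mul_assoc, one_mul, nonsing_inv_mul _ hdet, mul_smul_comm, mul_one]
    module
  rw [hdecomp]
  exact (hinv.smul hc).add_posSemidef (hL.inv.posSemidef.conjTranspose_mul_mul_same _)

end Shift

/-- The weighted Gram matrix `∑ₜ s t • vₜ vₜᵀ` of the rows `vₜ = V (idx t)` of `V` sampled by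
`idx`. -/
def sampledGram {ι κ τ : Type*} [Fintype τ] (V : Matrix ι κ ℝ) (idx : τ → ι) (s : τ → ℝ) :
    Matrix κ κ ℝ :=
  ∑ t, s t • vecMulVec (V (idx t)) (V (idx t))

section Barrier

variable {ι κ : Type*} [Fintype ι] [Fintype κ] [DecidableEq κ]

/-- The barrier condition of Batson, Spielman and Srivastava for `M = u • 1 - A` or
`M = A - l • 1`: the spectrum of `A` lies strictly on one side of the barrier (`u` or `l`), and the
barrier potential `tr M⁻¹` is at most `φ`. -/
structure WithinBarrier (M : Matrix κ κ ℝ) (φ : ℝ) : Prop where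
  posDef : M.PosDef
  trace_inv_le : M⁻¹.trace ≤ φ

/-- The quantity `U_A(v)` of Batson, Spielman and Srivastava, with `M` the distance of `A` to the
shifted upper barrier and `φ` the potential before the shift: subtracting `s • v vᵀ` from `M`
restores the potential `φ` as long as `s * upperCost M φ v < 1`. -/
noncomputable def upperCost (M : Matrix κ κ ℝ) (φ : ℝ) (v : κ → ℝ) : ℝ :=
  v ⬝ᵥ ((M⁻¹ * M⁻¹) *ᵥ v) / (φ - M⁻¹.trace) + v ⬝ᵥ (M⁻¹ *ᵥ v)

/-- The quantity `L_A(v)` of Batson, Spielman and Srivastava, with `M` the distance of `A` to the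
shifted lower barrier and `φ` the potential before the shift: adding `s • v vᵀ` to `M` restores the
potential `φ` as soon as `1 ≤ s * lowerGain M φ v`. -/
noncomputable def lowerGain (M : Matrix κ κ ℝ) (φ : ℝ) (v : κ → ℝ) : ℝ :=
  v ⬝ᵥ ((M⁻¹ * M⁻¹) *ᵥ v) / (M⁻¹.trace - φ) - v ⬝ᵥ (M⁻¹ *ᵥ v)

lemma upperCost_nonneg {M : Matrix κ κ ℝ} {φ : ℝ} (hM : M.PosDef) (hφ : M⁻¹.trace < φ)
    (v : κ → ℝ) : 0 ≤ upperCost M φ v :=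
  add_nonneg
    (div_nonneg ((posSemidef_mul_self hM.inv.isHermitian).dotProduct_mulVec_nonneg v)
      (sub_pos.mpr hφ).le)
    (hM.inv.posSemidef.dotProduct_mulVec_nonneg v)

lemma withinBarrier_sub_smul_vecMulVec {M : Matrix κ κ ℝ} {φ s : ℝ} {v : κ → ℝ}
    (hM : M.PosDef) (hφ : M⁻¹.trace < φ) (hs : 0 < s) (h : s * upperCost M φ v < 1) :
    WithinBarrier (M - s • vecMulVec v v) φ := by
  rw [upperCost] at h
  set p := v ⬝ᵥ ((M⁻¹ * M⁻¹) *ᵥ v)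
  set q := v ⬝ᵥ (M⁻¹ *ᵥ v) with hq
  have hp : 0 ≤ p := (posSemidef_mul_self hM.inv.isHermitian).dotProduct_mulVec_nonneg v
  have hgap : 0 < φ - M⁻¹.trace := sub_pos.mpr hφ
  have hle : s * p / (φ - M⁻¹.trace) < 1 + -s * q := by
    rw [mul_div_assoc]
    linarith
  have hden : 0 < 1 + -s * q := lt_of_le_of_lt (by positivity) hle
  rw [sub_eq_add_neg, ← neg_smul]
  refine ⟨posDef_add_smul_vecMulVec hM hden, ?_⟩
  rw [trace_inv_add_smul_vecMulVec hM.isUnit hden.ne', ← hq, neg_mul s p, neg_div, sub_neg_eq_add,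
    ← le_sub_iff_add_le', div_le_iff₀ hden]
  rw [div_lt_iff₀ hgap] at hle
  linarith

lemma withinBarrier_add_smul_vecMulVec {M : Matrix κ κ ℝ} {φ s : ℝ} {v : κ → ℝ}
    (hM : M.PosDef) (hφ : φ < M⁻¹.trace) (hs : 0 < s) (h : 1 ≤ s * lowerGain M φ v) :
    WithinBarrier (M + s • vecMulVec v v) φ := by
  rw [lowerGain] at h
  set p := v ⬝ᵥ ((M⁻¹ * M⁻¹) *ᵥ v)
  set q := v ⬝ᵥ (M⁻¹ *ᵥ v) with hq
  have hq0 : 0 ≤ q := hM.inv.posSemidef.dotProduct_mulVec_nonneg v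
  have hgap : 0 < M⁻¹.trace - φ := sub_pos.mpr hφ
  have hle : 1 + s * q ≤ s * p / (M⁻¹.trace - φ) := by
    rw [mul_div_assoc]
    linarith
  have hden : 0 < 1 + s * q := by positivity
  refine ⟨posDef_add_smul_vecMulVec hM hden, ?_⟩
  rw [trace_inv_add_smul_vecMulVec hM.isUnit hden.ne', ← hq, sub_le_comm, le_div_iff₀ hden]
  rw [le_div_iff₀ hgap] at hle
  linarith

lemma mul_trace_inv_mul_inv_lt [Nonempty κ] {P : Matrix κ κ ℝ} (hP : P.PosDef) {c : ℝ}
    (hc : 0 < c) :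
    c * ((P + c • 1)⁻¹ * (P + c • 1)⁻¹).trace < P⁻¹.trace - (P + c • 1)⁻¹.trace := by
  have hQ : (P + c • 1).PosDef := hP.add (PosDef.one.smul hc)
  set Q := P + c • 1
  have hconj : (Q⁻¹ * P⁻¹ * Q⁻¹).PosDef := by
    have := hP.inv.conjTranspose_mul_mul_same
      (mulVec_injective_iff_isUnit.mpr hQ.inv.isUnit)
    rwa [hQ.inv.isHermitian.eq] at this
  have htrace := congrArg trace
    (inv_sub_inv_eq_smul_sq_add hP.isUnit hQ.isUnit (add_sub_cancel_left P (c • 1)))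
  rw [trace_sub, trace_add, trace_smul, trace_smul, smul_eq_mul, smul_eq_mul] at htrace
  rw [htrace]
  exact lt_add_of_pos_right _ (mul_pos (pow_pos hc 2) hconj.trace_pos)

lemma trace_inv_add_smul_one_lt [Nonempty κ] {P : Matrix κ κ ℝ} (hP : P.PosDef) {c : ℝ}
    (hc : 0 < c) : (P + c • 1)⁻¹.trace < P⁻¹.trace := by
  have hQ : (P + c • 1).PosDef := hP.add (PosDef.one.smul hc)
  have hsq : 0 ≤ ((P + c • 1)⁻¹ * (P + c • 1)⁻¹).trace :=
    (posSemidef_mul_self hQ.inv.isHermitian).trace_nonneg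
  exact sub_pos.mp ((mul_nonneg hc.le hsq).trans_lt (mul_trace_inv_mul_inv_lt hP hc))

lemma trace_inv_sub_add_mul_sq_le {L N : Matrix κ κ ℝ} (hL : L.PosDef) (hN : N.PosDef)
    {c : ℝ} (hc : 0 < c) (hLN : L - N = c • 1) (h : c * L⁻¹.trace ≤ 1) :
    (N⁻¹.trace - L⁻¹.trace) + c * (N⁻¹.trace - L⁻¹.trace) ^ 2 ≤ c * (N⁻¹ * N⁻¹).trace := by
  set z := (N⁻¹ * L⁻¹ * N⁻¹).trace with hz
  have hNsymm : N⁻¹ᵀ = N⁻¹ := hN.inv.isHermitian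
  have hz0 : 0 ≤ z := by
    have := (hL.inv.posSemidef.conjTranspose_mul_mul_same N⁻¹).trace_nonneg
    rwa [hN.inv.isHermitian.eq] at this
  have hfirst : N⁻¹.trace - L⁻¹.trace = c * (L⁻¹ * N⁻¹).trace := by
    rw [← trace_sub, inv_sub_inv_of_sub_eq_smul_one hN.isUnit hL.isUnit hLN, trace_smul,
      trace_mul_comm, smul_eq_mul]
  have hsecond : N⁻¹.trace - L⁻¹.trace = c * (N⁻¹ * N⁻¹).trace - c ^ 2 * z := by
    have hNL : N - L = (-c) • 1 := by rw [← neg_sub, hLN, neg_smul]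
    have htrace := congrArg trace (inv_sub_inv_eq_smul_sq_add hL.isUnit hN.isUnit hNL)
    rw [trace_sub, trace_add, trace_smul, trace_smul, smul_eq_mul, smul_eq_mul, ← hz] at htrace
    linear_combination -htrace
  have hcs : (L⁻¹ * N⁻¹).trace ^ 2 ≤ L⁻¹.trace * z := by
    simpa only [hNsymm] using sq_trace_mul_le hL.inv.posSemidef N⁻¹
  have hsq : c * (N⁻¹.trace - L⁻¹.trace) ^ 2 ≤ c ^ 2 * z := by
    calc c * (N⁻¹.trace - L⁻¹.trace) ^ 2 = c ^ 3 * (L⁻¹ * N⁻¹).trace ^ 2 := by rw [hfirst]; ring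
      _ ≤ c ^ 3 * (L⁻¹.trace * z) := by gcongr
      _ = c ^ 2 * z * (c * L⁻¹.trace) := by ring
      _ ≤ c ^ 2 * z := mul_le_of_le_one_right (by positivity) h
  linarith

lemma sum_upperCost_lt [Nonempty κ] {V : Matrix ι κ ℝ} (hV : Vᵀ * V = 1) {U : Matrix κ κ ℝ}
    (hU : U.PosDef) {δ : ℝ} (hδ : 0 < δ) :
    ∑ i, upperCost (U + δ • 1) U⁻¹.trace (V i) < δ⁻¹ + U⁻¹.trace := by
  have hlt := trace_inv_add_smul_one_lt hU hδ
  simp only [upperCost, Finset.sum_add_distrib, ← Finset.sum_div, sum_row_dotProduct_mulVec_row hV]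
  refine add_lt_add ?_ hlt
  rw [div_lt_iff₀ (sub_pos.mpr hlt), inv_mul_eq_div, lt_div_iff₀' hδ]
  exact mul_trace_inv_mul_inv_lt hU hδ

lemma le_sum_lowerGain [Nonempty κ] {V : Matrix ι κ ℝ} (hV : Vᵀ * V = 1) {L : Matrix κ κ ℝ}
    (hL : L.PosDef) {δ : ℝ} (hδ : 0 < δ) (h : δ * L⁻¹.trace < 1) :
    δ⁻¹ - L⁻¹.trace ≤ ∑ i, lowerGain (L - δ • 1) L⁻¹.trace (V i) := by
  have hN : (L - δ • 1).PosDef := posDef_sub_smul_one hL hδ h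
  have hlt : L⁻¹.trace < (L - δ • 1)⁻¹.trace := by
    simpa only [sub_add_cancel] using trace_inv_add_smul_one_lt hN hδ
  have hquad := trace_inv_sub_add_mul_sq_le hL hN hδ (sub_sub_cancel L (δ • 1)) h.le
  simp only [lowerGain, Finset.sum_sub_distrib, ← Finset.sum_div, sum_row_dotProduct_mulVec_row hV]
  set Δ := (L - δ • 1)⁻¹.trace - L⁻¹.trace
  have hgap : 0 < Δ := sub_pos.mpr hlt
  have hdiv : δ⁻¹ + Δ ≤ ((L - δ • 1)⁻¹ * (L - δ • 1)⁻¹).trace / Δ := by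
    rw [le_div_iff₀ hgap, ← mul_le_mul_iff_right₀ hδ]
    calc δ * ((δ⁻¹ + Δ) * Δ) = Δ + δ * Δ ^ 2 := by field_simp
      _ ≤ _ := hquad
  linarith

variable [Nonempty κ] {V : Matrix ι κ ℝ} {U L : Matrix κ κ ℝ} {φU φL δU δL : ℝ}

lemma exists_row_withinBarrier (hV : Vᵀ * V = 1) (hU : WithinBarrier U φU)
    (hL : WithinBarrier L φL) (hδU : 0 < δU) (hδL : 0 < δL) (hφ : δU⁻¹ + φU ≤ δL⁻¹ - φL) :
    ∃ i, ∃ s : ℝ, 0 < s ∧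
      WithinBarrier (U + δU • 1 - s • vecMulVec (V i) (V i)) φU ∧
      WithinBarrier (L - δL • 1 + s • vecMulVec (V i) (V i)) φL := by
  have hUtrace : 0 < U⁻¹.trace := hU.posDef.inv.trace_pos
  have hLtrace : δL * L⁻¹.trace < 1 := by
    rw [← lt_div_iff₀' hδL, one_div]
    linarith [hU.trace_inv_le, hL.trace_inv_le, inv_pos.mpr hδU]
  have hM : (U + δU • 1).PosDef := hU.posDef.add (PosDef.one.smul hδU)
  have hN : (L - δL • 1).PosDef := posDef_sub_smul_one hL.posDef hδL hLtrace
  have hMlt : (U + δU • 1)⁻¹.trace < U⁻¹.trace := trace_inv_add_smul_one_lt hU.posDef hδU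
  have hNlt : L⁻¹.trace < (L - δL • 1)⁻¹.trace := by
    simpa only [sub_add_cancel] using trace_inv_add_smul_one_lt hN hδL
  have hsum : ∑ i, upperCost (U + δU • 1) U⁻¹.trace (V i) <
      ∑ i, lowerGain (L - δL • 1) L⁻¹.trace (V i) := by
    linarith [sum_upperCost_lt hV hU.posDef hδU, le_sum_lowerGain hV hL.posDef hδL hLtrace,
      hU.trace_inv_le, hL.trace_inv_le]
  obtain ⟨i, -, hi⟩ := Finset.exists_lt_of_sum_lt hsum
  have hgain : 0 < lowerGain (L - δL • 1) L⁻¹.trace (V i) :=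
    (upperCost_nonneg hM hMlt (V i)).trans_lt hi
  refine ⟨i, _, inv_pos.mpr hgain, ?_, ?_⟩
  · have := withinBarrier_sub_smul_vecMulVec hM hMlt (inv_pos.mpr hgain)
      ((inv_mul_lt_one₀ hgain).mpr hi)
    exact ⟨this.posDef, this.trace_inv_le.trans hU.trace_inv_le⟩
  · have := withinBarrier_add_smul_vecMulVec hN hNlt (inv_pos.mpr hgain)
      (inv_mul_cancel₀ hgain.ne').ge
    exact ⟨this.posDef, this.trace_inv_le.trans hL.trace_inv_le⟩

lemma exists_sampledGram_withinBarrier (hV : Vᵀ * V = 1) (hU : WithinBarrier U φU)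
    (hL : WithinBarrier L φL) (hδU : 0 < δU) (hδL : 0 < δL) (hφ : δU⁻¹ + φU ≤ δL⁻¹ - φL)
    (m : ℕ) :
    ∃ (idx : Fin m → ι) (s : Fin m → ℝ), (∀ t, 0 < s t) ∧
      WithinBarrier (U + (m * δU) • 1 - sampledGram V idx s) φU ∧
      WithinBarrier (L - (m * δL) • 1 + sampledGram V idx s) φL := by
  induction m with
  | zero => exact ⟨Fin.elim0, Fin.elim0, fun t => t.elim0, by simpa [sampledGram] using ⟨hU, hL⟩⟩
  | succ m ih =>
    obtain ⟨idx, s, hs, hUm, hLm⟩ := ih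
    obtain ⟨i, a, ha, hUa, hLa⟩ := exists_row_withinBarrier hV hUm hLm hδU hδL hφ
    have hgram : sampledGram V (Fin.cons i idx) (Fin.cons a s) =
        a • vecMulVec (V i) (V i) + sampledGram V idx s := by
      simp only [sampledGram, Fin.sum_univ_succ, Fin.cons_zero, Fin.cons_succ]
    refine ⟨Fin.cons i idx, Fin.cons a s, Fin.cases ha hs, ?_, ?_⟩
    · convert hUa using 1
      rw [hgram]
      push_cast
      module
    · convert hLa using 1
      rw [hgram]
      push_cast
      module

omit [Nonempty κ] in
lemma withinBarrier_smul_one {c φ : ℝ} (hc : 0 < c) (h : Fintype.card κ / c ≤ φ) :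
    WithinBarrier (c • (1 : Matrix κ κ ℝ)) φ := by
  refine ⟨PosDef.one.smul hc, ?_⟩
  have hinv : (c • (1 : Matrix κ κ ℝ))⁻¹ = c⁻¹ • 1 :=
    inv_eq_left_inv (by rw [smul_mul_smul_comm, one_mul, inv_mul_cancel₀ hc.ne', one_smul])
  rwa [hinv, trace_smul, trace_one, smul_eq_mul, inv_mul_eq_div]

lemma exists_sampledGram_between (hV : Vᵀ * V = 1) {r : ℕ} (hr : Fintype.card κ < r) {e : ℝ}
    (he : e = √(Fintype.card κ / r)) :
    ∃ (idx : Fin r → ι) (s : Fin r → ℝ), (∀ t, 0 < s t) ∧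
      ((1 + e) ^ 2 • 1 - sampledGram V idx s).PosDef ∧
      (sampledGram V idx s - (1 - e) ^ 2 • 1).PosDef := by
  have hκ : (0 : ℝ) < Fintype.card κ := by exact_mod_cast Fintype.card_pos
  have hκr : (Fintype.card κ : ℝ) < r := by exact_mod_cast hr
  have hr0 : (0 : ℝ) < r := hκ.trans hκr
  have he0 : 0 < e := he ▸ Real.sqrt_pos.mpr (by positivity)
  have he1 : 0 < 1 - e := by
    rw [he, sub_pos, Real.sqrt_lt' one_pos, one_pow, div_lt_one hr0]
    exact hκr
  have hcard : (Fintype.card κ : ℝ) = e ^ 2 * r := by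
    rw [he, Real.sq_sqrt (by positivity), div_mul_cancel₀ _ hr0.ne']
  -- The barriers start at `e * (1 + e)` and `-e * (1 - e)`, so that `r` shifts by `(1 ± e) / r`
  -- take them to `(1 ± e) ^ 2`; both sides of the averaging condition then equal `r`.
  have hU : WithinBarrier ((e * (1 + e)) • (1 : Matrix κ κ ℝ)) (e * r / (1 + e)) :=
    withinBarrier_smul_one (by positivity) (by rw [hcard]; field_simp; rfl)
  have hL : WithinBarrier ((e * (1 - e)) • (1 : Matrix κ κ ℝ)) (e * r / (1 - e)) :=
    withinBarrier_smul_one (by positivity) (by rw [hcard]; field_simp; rfl)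
  have hφ : ((1 + e) / r)⁻¹ + e * r / (1 + e) ≤ ((1 - e) / r)⁻¹ - e * r / (1 - e) := by
    apply le_of_eq
    field_simp
  obtain ⟨idx, s, hs, hUr, hLr⟩ :=
    exists_sampledGram_withinBarrier hV hU hL (by positivity) (by positivity) hφ r
  refine ⟨idx, s, hs, ?_, ?_⟩
  · convert hUr.posDef using 1
    rw [mul_div_cancel₀ _ hr0.ne']
    module
  · convert hLr.posDef using 1
    rw [mul_div_cancel₀ _ hr0.ne']
    module

end Barrier

lemma posSemidef_sq_smul_one_sub_mul_self {κ : Type*} [Fintype κ] [DecidableEq κ]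
    {H : Matrix κ κ ℝ} {m : ℝ} (hm : 0 < m) (hsub : (m • 1 - H).PosSemidef)
    (hadd : (m • 1 + H).PosSemidef) : (m ^ 2 • 1 - H * H).PosSemidef := by
  set P := m • 1 - H with hP
  set Q := m • 1 + H with hQ
  have hdecomp : m ^ 2 • 1 - H * H = (2 * m)⁻¹ • (Pᴴ * Q * P + Qᴴ * P * Q) := by
    rw [hsub.isHermitian.eq, hadd.isHermitian.eq, eq_inv_smul_iff₀ (by positivity), hP, hQ]
    simp only [mul_add, add_mul, mul_sub, sub_mul, smul_mul_assoc, mul_smul_comm, one_mul, mul_one]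
    module
  rw [hdecomp]
  exact ((hadd.conjTranspose_mul_mul_same P).add (hsub.conjTranspose_mul_mul_same Q)).smul
    (by positivity)

lemma specNorm_le_of_posSemidef {n : ℕ} {H : Matrix (Fin n) (Fin n) ℝ} {m : ℝ} (hm : 0 < m)
    (hsub : (m • 1 - H).PosSemidef) (hadd : (m • 1 + H).PosSemidef) : specNorm H ≤ m := by
  have hsumsq (z : Fin n → ℝ) : ∑ i, z i ^ 2 = z ⬝ᵥ z := by simp only [dotProduct, sq]
  have hsymm : Hᵀ = H := by
    have := hadd.isHermitian.sub (isHermitian_one.smul (IsSelfAdjoint.all m))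
    rwa [add_sub_cancel_left] at this
  refine Real.sSup_le ?_ hm.le
  rintro _ ⟨x, hx, rfl⟩
  have hxx : x ⬝ᵥ x = 1 := by rwa [euclNorm, Real.sqrt_eq_one, hsumsq] at hx
  have hsq := (posSemidef_sq_smul_one_sub_mul_self hm hsub hadd).dotProduct_mulVec_nonneg x
  rw [star_trivial, sub_mulVec, smul_mulVec, one_mulVec, dotProduct_sub, dotProduct_smul, hxx,
    ← mulVec_mulVec, dotProduct_mulVec, ← mulVec_transpose, hsymm, smul_eq_mul, mul_one,
    sub_nonneg] at hsq
  rwa [euclNorm, hsumsq, Real.sqrt_le_left hm.le]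

lemma exists_isSamplingRescaling {ℓ r d : ℕ} (V : Matrix (Fin d) (Fin ℓ) ℝ) (idx : Fin r → Fin d)
    {s : Fin r → ℝ} (hs : ∀ t, 0 < s t) :
    ∃ R : Matrix (Fin d) (Fin r) ℝ, IsSamplingRescaling R ∧
      Vᵀ * R * Rᵀ * V = sampledGram V idx s := by
  let R : Matrix (Fin d) (Fin r) ℝ := fun i t => √(s t) * if i = idx t then 1 else 0
  refine ⟨R, ⟨idx, fun t => √(s t), fun t => Real.sqrt_pos.mpr (hs t), fun _ _ => rfl⟩, ?_⟩
  have hVR (j : Fin ℓ) (t : Fin r) : (Vᵀ * R) j t = V (idx t) j * √(s t) := by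
    rw [Matrix.mul_apply]
    simp [R]
  have hRV : Rᵀ * V = (Vᵀ * R)ᵀ := by rw [transpose_mul, transpose_transpose]
  ext j k
  rw [Matrix.mul_assoc, hRV, Matrix.mul_apply, sampledGram, Matrix.sum_apply]
  refine Finset.sum_congr rfl fun t _ => ?_
  rw [transpose_apply, hVR, hVR, Matrix.smul_apply, vecMulVec_apply, smul_eq_mul]
  linear_combination V (idx t) j * V (idx t) k * Real.mul_self_sqrt (hs t).le

/-- **Lemma 2 (modified BSS).** For `V ∈ ℝ^{d×ℓ}` with orthonormal columns and
`r > ℓ`, there is a sampling-and-rescaling matrix `R ∈ ℝ^{d×r}` with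
`‖VᵀV − VᵀRRᵀV‖₂ = ‖I_ℓ − VᵀRRᵀV‖₂ ≤ 3√(ℓ/r)`. -/
theorem bss_spectral_error_bound
    (ℓ r d : ℕ) (hℓ : 0 < ℓ) (hr : 0 < r) (hd : 0 < d) (hrℓ : ℓ < r)
    (V : Matrix (Fin d) (Fin ℓ) ℝ) (hV : Vᵀ * V = 1) :
    ∃ R : Matrix (Fin d) (Fin r) ℝ, IsSamplingRescaling R ∧
      specNorm (Vᵀ * V - Vᵀ * R * Rᵀ * V) = specNorm (1 - Vᵀ * R * Rᵀ * V) ∧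
      specNorm (1 - Vᵀ * R * Rᵀ * V) ≤ 3 * Real.sqrt ((ℓ : ℝ) / r) := by
  have : Nonempty (Fin ℓ) := Fin.pos_iff_nonempty.mp hℓ
  have hrpos : (0 : ℝ) < r := by exact_mod_cast hr
  set e := √((ℓ : ℝ) / r)
  have he0 : 0 < e := Real.sqrt_pos.mpr (by positivity)
  have he1 : e ≤ 1 := Real.sqrt_le_one.mpr (div_le_one_of_le₀ (by exact_mod_cast hrℓ.le) hrpos.le)
  obtain ⟨idx, s, hs, hupper, hlower⟩ :=
    exists_sampledGram_between hV (by rwa [Fintype.card_fin]) (e := e) (by rw [Fintype.card_fin])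
  obtain ⟨R, hR, hgram⟩ := exists_isSamplingRescaling V idx hs
  refine ⟨R, hR, by rw [hV], ?_⟩
  rw [hgram]
  refine specNorm_le_of_posSemidef (by positivity) ?_ ?_
  · convert hlower.posSemidef.add (PosSemidef.one.smul (show 0 ≤ e + e ^ 2 by positivity)) using 1
    module
  · convert hupper.posSemidef.add
      (PosSemidef.one.smul (mul_nonneg he0.le (sub_nonneg.mpr he1))) using 1
    module
end

section
/- There is an absolute constant c > 0 with the following property. Let ε ∈ (0, 1/2], δ ∈ (0, 1), and let V ∈ ℝ^{d×ℓ} satisfy V^T V = I_ℓ. Define leverage-score probabilities p_i = ‖v_i‖₂²/ℓ for i = 1,…,d, where v_i is the i-th row of V (so Σ_i p_i = 1). Let r be an integer with r ≥ c · (ℓ/ε²) · log(ℓ/(ε²√δ)), draw indices j_1,…,j_r independently and identically distributed according to (p_1,…,p_d), and let R ∈ ℝ^{d×r} be the random matrix whose t-th column equals (1/√(r · p_{j_t})) · e_{j_t}. Then with probability at least 1 − δ, ‖V^T V − V^T R R^T V‖₂ = ‖I_ℓ − V^T R R^T V‖₂ ≤ ε. -/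
open Matrix

/-- The leverage-score probabilities `p_i = ‖v_i‖₂²/ℓ`, where `v_i` is the
`i`-th row of `V ∈ ℝ^{d×ℓ}`. -/
noncomputable def lvgProb {d ℓ : ℕ} (V : Matrix (Fin d) (Fin ℓ) ℝ) (i : Fin d) : ℝ :=
  (∑ k, V i k ^ 2) / ℓ

/-- The sampling-and-rescaling matrix `R ∈ ℝ^{d×r}` determined by the drawn
indices `j_1,…,j_r`: the `t`-th column is `(1/√(r·p_{j_t}))·e_{j_t}`. -/
noncomputable def lvgMatrix {d ℓ : ℕ} (V : Matrix (Fin d) (Fin ℓ) ℝ) (r : ℕ)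
    (j : Fin r → Fin d) : Matrix (Fin d) (Fin r) ℝ :=
  Matrix.of fun i t => if i = j t then 1 / Real.sqrt (r * lvgProb V (j t)) else 0

/-!
With `X_i = v_i v_iᵀ / p_i`, the matrix `VᵀRRᵀV` is the average of the independent matrices
`X_{j_1}, …, X_{j_r}`, each of mean `VᵀV = 1`. Since `X_i ^ 2 = ℓ X_i`, the centred summands
`Y_i = X_i - 1` have norm at most `ℓ + 1` and variance `ℓ - 1`, so the claim is a matrix Bernstein
inequality. That follows the Ahlswede–Winter method: `exp ‖S‖ ≤ tr exp S + tr exp (-S)`, and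
`E tr exp (H + ∑ Y)` is bounded by peeling off one summand at a time with the Golden–Thompson
inequality `tr exp (A + B) ≤ tr (exp A * exp B)` and `exp Y ≤ 1 + Y + Y ^ 2`.

Golden–Thompson is the limit of `tr (P * Q) ^ n ≤ tr (P ^ n * Q ^ n)` along `n = 2 ^ k`, with
`P = exp (A / n)` and `Q = exp (B / n)`, by the Lie product formula; for powers of two the trace
inequality is iterated Cauchy–Schwarz.
-/

section LieProductFormula

open Filter NormedSpace
open scoped Topology

theorem norm_pow_sub_pow_le {R : Type*} [SeminormedRing R] {x y : R} {M : ℝ}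
    (hx : ‖x‖ ≤ M) (hy : ‖y‖ ≤ M) (n : ℕ) :
    ‖x ^ n - y ^ n‖ ≤ n * M ^ (n - 1) * ‖x - y‖ := by
  have hM : 0 ≤ M := (norm_nonneg x).trans hx
  match n with
  | 0 => simp
  | 1 => simp
  | n + 2 =>
    have ih := norm_pow_sub_pow_le hx hy (n + 1)
    have hy_pow : ‖y ^ (n + 1)‖ ≤ M ^ (n + 1) :=
      (norm_pow_le' y n.succ_pos).trans (pow_le_pow_left₀ (norm_nonneg y) hy _)
    calc ‖x ^ (n + 2) - y ^ (n + 2)‖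
        = ‖x * (x ^ (n + 1) - y ^ (n + 1)) + (x - y) * y ^ (n + 1)‖ := by
          rw [mul_sub, sub_mul, ← pow_succ', ← pow_succ', sub_add_sub_cancel]
      _ ≤ ‖x‖ * ‖x ^ (n + 1) - y ^ (n + 1)‖ + ‖x - y‖ * ‖y ^ (n + 1)‖ :=
          (norm_add_le _ _).trans (add_le_add (norm_mul_le _ _) (norm_mul_le _ _))
      _ ≤ M * ((n + 1 : ℕ) * M ^ n * ‖x - y‖) + ‖x - y‖ * M ^ (n + 1) := by
          gcongr
          simpa using ih
      _ = (n + 2 : ℕ) * M ^ (n + 1) * ‖x - y‖ := by push_cast; ring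

variable (𝕂 : Type*) {𝔸 : Type*} [RCLike 𝕂] [NormedRing 𝔸] [NormedAlgebra 𝕂 𝔸]

include 𝕂 in
theorem norm_exp_le_exp_norm [NormOneClass 𝔸] (x : 𝔸) : ‖exp x‖ ≤ Real.exp ‖x‖ := by
  rw [congrFun (exp_eq_tsum 𝕂) x, Real.exp_eq_exp_ℝ, congrFun (exp_eq_tsum ℝ) ‖x‖]
  refine tsum_of_norm_bounded (expSeries_summable' (𝕂 := ℝ) ‖x‖).hasSum fun k => ?_
  rw [norm_smul, smul_eq_mul, norm_inv, RCLike.norm_natCast]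
  gcongr
  exact norm_pow_le x k

theorem tendsto_natCast_mul_norm_exp_mul_exp_sub_exp_add [CompleteSpace 𝔸] (x y : 𝔸) :
    Tendsto (fun n : ℕ => n * ‖exp ((n : 𝕂)⁻¹ • x) * exp ((n : 𝕂)⁻¹ • y) -
      exp ((n : 𝕂)⁻¹ • (x + y))‖) atTop (𝓝 0) := by
  set φ : 𝕂 → 𝔸 := fun t => exp (t • x) * exp (t • y) - exp (t • (x + y)) with hφ
  have hφ_deriv : HasDerivAt φ 0 0 :=
    (((hasDerivAt_exp_smul_const x (0 : 𝕂)).mul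
      (hasDerivAt_exp_smul_const y (0 : 𝕂))).sub
      (hasDerivAt_exp_smul_const (x + y) (0 : 𝕂))).congr_deriv (by simp)
  have inv_tendsto : Tendsto (fun n : ℕ => (n : 𝕂)⁻¹) atTop (𝓝[≠] 0) := by
    refine tendsto_nhdsWithin_iff.2 ⟨tendsto_inv_atTop_nhds_zero_nat, ?_⟩
    filter_upwards [eventually_ne_atTop 0] with n hn
    exact inv_ne_zero (Nat.cast_ne_zero.2 hn)
  simpa [hφ, norm_smul, Function.comp_def, -smul_add] using
    (hφ_deriv.tendsto_slope_zero.comp inv_tendsto).norm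

theorem tendsto_exp_mul_exp_pow [NormOneClass 𝔸] [CompleteSpace 𝔸] (x y : 𝔸) :
    Tendsto (fun n : ℕ => (exp ((n : 𝕂)⁻¹ • x) * exp ((n : 𝕂)⁻¹ • y)) ^ n) atTop
      (𝓝 (exp (x + y))) := by
  rw [tendsto_iff_norm_sub_tendsto_zero]
  have bound_tendsto := (tendsto_natCast_mul_norm_exp_mul_exp_sub_exp_add 𝕂 x y).const_mul
    (Real.exp (‖x‖ + ‖y‖))
  rw [mul_zero] at bound_tendsto
  refine squeeze_zero' (.of_forall fun _ => norm_nonneg _) ?_ bound_tendsto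
  filter_upwards [eventually_ne_atTop 0] with n hn
  set M := Real.exp ((n : ℝ)⁻¹ * (‖x‖ + ‖y‖)) with hM
  have norm_prod_le : ‖exp ((n : 𝕂)⁻¹ • x) * exp ((n : 𝕂)⁻¹ • y)‖ ≤ M := by
    refine (norm_mul_le_of_le (norm_exp_le_exp_norm 𝕂 _) (norm_exp_le_exp_norm 𝕂 _)).trans_eq ?_
    rw [hM, ← Real.exp_add, norm_smul, norm_smul, norm_inv, RCLike.norm_natCast, mul_add]
  have norm_exp_le : ‖exp ((n : 𝕂)⁻¹ • (x + y))‖ ≤ M := by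
    refine (norm_exp_le_exp_norm 𝕂 _).trans (Real.exp_le_exp.2 ?_)
    rw [norm_smul, norm_inv, RCLike.norm_natCast]
    gcongr
    exact norm_add_le x y
  have M_pow : M ^ n = Real.exp (‖x‖ + ‖y‖) := by
    rw [hM, ← Real.exp_nat_mul, mul_inv_cancel_left₀ (Nat.cast_ne_zero.2 hn)]
  have exp_pow : exp ((n : 𝕂)⁻¹ • (x + y)) ^ n = exp (x + y) := by
    let : NormedAlgebra ℚ 𝔸 := .restrictScalars ℚ 𝕂 𝔸
    rw [← NormedSpace.exp_nsmul, ← Nat.cast_smul_eq_nsmul 𝕂,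
      smul_inv_smul₀ (Nat.cast_ne_zero.2 hn)]
  set D := ‖exp ((n : 𝕂)⁻¹ • x) * exp ((n : 𝕂)⁻¹ • y) - exp ((n : 𝕂)⁻¹ • (x + y))‖
  calc ‖(exp ((n : 𝕂)⁻¹ • x) * exp ((n : 𝕂)⁻¹ • y)) ^ n - exp (x + y)‖
      ≤ n * M ^ (n - 1) * D := exp_pow ▸ norm_pow_sub_pow_le norm_prod_le norm_exp_le n
    _ ≤ n * M ^ n * D := by
        gcongr
        · exact Real.one_le_exp (by positivity)
        · exact n.sub_le 1
    _ = Real.exp (‖x‖ + ‖y‖) * (n * D) := by rw [M_pow]; ring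

end LieProductFormula

section TracePowers

theorem trace_mul_pow_comm {n R : Type*} [Fintype n] [DecidableEq n] [CommSemiring R]
    (A B : Matrix n n R) (k : ℕ) : trace ((A * B) ^ k) = trace ((B * A) ^ k) := by
  cases k with
  | zero => simp
  | succ k => rw [pow_succ, ← mul_assoc, mul_pow_mul, mul_assoc, trace_mul_comm,
      mul_assoc, ← pow_succ]

variable {𝕜 n : Type*} [RCLike 𝕜] [Fintype n]

open scoped ComplexOrder in
theorem two_mul_re_trace_conjTranspose_mul_le (A B : Matrix n n 𝕜) :
    2 * RCLike.re (trace (Aᴴ * B)) ≤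
      RCLike.re (trace (Aᴴ * A)) + RCLike.re (trace (Bᴴ * B)) := by
  have nonneg := (RCLike.nonneg_iff.1 (posSemidef_conjTranspose_mul_self (A - B)).trace_nonneg).1
  have symm : RCLike.re (trace (Bᴴ * A)) = RCLike.re (trace (Aᴴ * B)) := by
    rw [← RCLike.conj_re, starRingEnd_apply, ← trace_conjTranspose, conjTranspose_mul,
      conjTranspose_conjTranspose]
  simp only [conjTranspose_sub, sub_mul, mul_sub, trace_sub, map_sub] at nonneg
  linarith

variable [DecidableEq n]

/- The two bounds are proved together because each feeds the other: passing from `k` to `k + 1`,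
both apply the first at `k` to a product of two factors, regroup cyclically, and then apply the
second at `k`. -/
theorem re_trace_pow_two_pow_le_and_re_trace_mul_pow_two_pow_le (k : ℕ) :
    (∀ M : Matrix n n 𝕜,
      RCLike.re (trace (M ^ 2 ^ (k + 1))) ≤ RCLike.re (trace ((M * Mᴴ) ^ 2 ^ k))) ∧
    ∀ P Q : Matrix n n 𝕜, P.IsHermitian → Q.IsHermitian →
      RCLike.re (trace ((P * Q) ^ 2 ^ k)) ≤ RCLike.re (trace (P ^ 2 ^ k * Q ^ 2 ^ k)) := by
  induction k with
  | zero =>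
    refine ⟨fun M => ?_, fun P Q _ _ => by simp⟩
    have cauchy_schwarz := two_mul_re_trace_conjTranspose_mul_le Mᴴ M
    rw [conjTranspose_conjTranspose, trace_mul_comm Mᴴ] at cauchy_schwarz
    simp only [zero_add, pow_one, pow_zero, pow_two]
    linarith
  | succ k ih =>
    obtain ⟨ihM, ihPQ⟩ := ih
    have two_pow_succ : 2 ^ (k + 1) = 2 * 2 ^ k := pow_succ' 2 k
    refine ⟨fun M => ?_, fun P Q hP hQ => ?_⟩
    · have hP := isHermitian_conjTranspose_mul_self M
      have hQ := isHermitian_mul_conjTranspose_self M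
      have cauchy_schwarz := two_mul_re_trace_conjTranspose_mul_le
        ((Mᴴ * M) ^ 2 ^ k) ((M * Mᴴ) ^ 2 ^ k)
      rw [(hP.pow _).eq, (hQ.pow _).eq, ← pow_two, ← pow_two, ← pow_mul', ← pow_mul',
        ← two_pow_succ, trace_mul_pow_comm Mᴴ M] at cauchy_schwarz
      calc RCLike.re (trace (M ^ 2 ^ (k + 1 + 1)))
          = RCLike.re (trace ((M ^ 2) ^ 2 ^ (k + 1))) := by rw [← pow_mul, ← pow_succ']
        _ ≤ RCLike.re (trace ((M ^ 2 * (M ^ 2)ᴴ) ^ 2 ^ k)) := ihM _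
        _ = RCLike.re (trace (((Mᴴ * M) * (M * Mᴴ)) ^ 2 ^ k)) := by
          rw [conjTranspose_pow, pow_two, pow_two, mul_assoc M M, trace_mul_pow_comm M,
            trace_mul_pow_comm (Mᴴ * M)]
          simp only [mul_assoc]
        _ ≤ RCLike.re (trace ((Mᴴ * M) ^ 2 ^ k * (M * Mᴴ) ^ 2 ^ k)) := ihPQ _ _ hP hQ
        _ ≤ RCLike.re (trace ((M * Mᴴ) ^ 2 ^ (k + 1))) := by linarith
    · calc RCLike.re (trace ((P * Q) ^ 2 ^ (k + 1)))
          ≤ RCLike.re (trace ((P * Q * (P * Q)ᴴ) ^ 2 ^ k)) := ihM _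
        _ = RCLike.re (trace ((P ^ 2 * Q ^ 2) ^ 2 ^ k)) := by
          rw [conjTranspose_mul, hP.eq, hQ.eq, ← mul_assoc, trace_mul_pow_comm]
          simp only [pow_two, mul_assoc]
        _ ≤ RCLike.re (trace ((P ^ 2) ^ 2 ^ k * (Q ^ 2) ^ 2 ^ k)) := ihPQ _ _ (hP.pow 2) (hQ.pow 2)
        _ = RCLike.re (trace (P ^ 2 ^ (k + 1) * Q ^ 2 ^ (k + 1))) := by
          rw [← pow_mul, ← pow_mul, two_pow_succ]

end TracePowers

section MatrixBernstein

open Filter NormedSpace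
open scoped Matrix.Norms.L2Operator MatrixOrder ComplexOrder

theorem exp_le_one_add_add_sq {A : Type*} [NormedRing A] [StarRing A] [NormedAlgebra ℝ A]
    [PartialOrder A] [StarOrderedRing A] [IsometricContinuousFunctionalCalculus ℝ A IsSelfAdjoint]
    [NonnegSpectrumClass ℝ A] {a : A} (ha : IsSelfAdjoint a) (norm_le : ‖a‖ ≤ 1) :
    exp a ≤ 1 + a + a ^ 2 := by
  have polynomial : cfc (fun t : ℝ => 1 + t + t ^ 2) a = 1 + a + a ^ 2 := by
    rw [cfc_add .., cfc_add .., cfc_const_one ℝ a, cfc_id' ℝ a, cfc_pow_id a 2]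
  rw [← CFC.real_exp_eq_normedSpace_exp, ← polynomial]
  refine cfc_mono fun t ht => ?_
  have norm_t_le := (IsometricContinuousFunctionalCalculus.norm_spectrum_le a ht ha).trans norm_le
  linarith [le_abs_self (Real.exp t - 1 - t), Real.abs_exp_sub_one_sub_id_le norm_t_le]

theorem sum_smul_exp_le_exp_smul_one {A ι : Type*} [NormedRing A] [StarRing A] [NormedAlgebra ℝ A]
    [StarModule ℝ A] [PartialOrder A] [StarOrderedRing A]
    [IsometricContinuousFunctionalCalculus ℝ A IsSelfAdjoint]
    [NonnegSpectrumClass ℝ A] [Fintype ι] {p : ι → ℝ} (hp : p ∈ stdSimplex ℝ ι) {Y : ι → A} {v : ℝ}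
    (hY : ∀ i, IsSelfAdjoint (Y i)) (norm_le : ∀ i, ‖Y i‖ ≤ 1) (mean : ∑ i, p i • Y i = 0)
    (variance : ∑ i, p i • Y i ^ 2 ≤ v • 1) : ∑ i, p i • exp (Y i) ≤ Real.exp v • 1 :=
  calc ∑ i, p i • exp (Y i)
      ≤ ∑ i, p i • (1 + Y i + Y i ^ 2) := Finset.sum_le_sum fun i _ =>
        smul_le_smul_of_nonneg_left (exp_le_one_add_add_sq (hY i) (norm_le i)) (hp.1 i)
    _ = 1 + ∑ i, p i • Y i ^ 2 := by
      simp only [smul_add, Finset.sum_add_distrib, mean, ← Finset.sum_smul, hp.2, one_smul,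
        add_zero]
    _ ≤ (1 + v) • 1 := by rw [add_smul, one_smul]; gcongr
    _ ≤ Real.exp v • 1 :=
      smul_le_smul_of_nonneg_right (by linarith [Real.add_one_le_exp v]) zero_le_one

theorem sum_le_sum_indicator_add_exp_mul_sum {α : Type*} [Fintype α] {w : α → ℝ}
    (hw : ∀ i, 0 ≤ w i) (f : α → ℝ) (a : ℝ) {θ : ℝ} (hθ : 0 ≤ θ) :
    ∑ i, w i ≤ ∑ i, Set.indicator {i | f i ≤ a} w i +
      Real.exp (-(θ * a)) * ∑ i, w i * Real.exp (θ * f i) := by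
  rw [Finset.mul_sum, ← Finset.sum_add_distrib]
  refine Finset.sum_le_sum fun i _ => ?_
  rw [mul_left_comm, ← Real.exp_add]
  by_cases hi : f i ≤ a
  · rw [Set.indicator_of_mem (s := {i | f i ≤ a}) hi]
    exact le_add_of_nonneg_right (mul_nonneg (hw i) (Real.exp_nonneg _))
  · rw [Set.indicator_of_notMem (s := {i | f i ≤ a}) hi, zero_add]
    refine le_mul_of_one_le_right (hw i) (Real.one_le_exp ?_)
    linarith [mul_le_mul_of_nonneg_left (not_le.1 hi).le hθ]

variable {𝕜 n : Type*} [RCLike 𝕜] [Fintype n]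

theorem re_trace_mul_le_re_trace_mul {P A B : Matrix n n 𝕜} (hP : 0 ≤ P) (hAB : A ≤ B) :
    RCLike.re (trace (P * A)) ≤ RCLike.re (trace (P * B)) := by
  classical
  obtain ⟨C, rfl⟩ := CStarAlgebra.nonneg_iff_eq_star_mul_self.1 hP
  have conj_nonneg := (le_iff.1 hAB).mul_mul_conjTranspose_same C
  have re_trace_nonneg := (RCLike.nonneg_iff.1 conj_nonneg.trace_nonneg).1
  rwa [trace_mul_comm, ← mul_assoc, mul_sub, trace_sub, map_sub, sub_nonneg] at re_trace_nonneg

variable [DecidableEq n]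

/-- `Matrix n n 𝕜` with the spectral norm as a real normed algebra. Mathlib has this over `𝕜` only,
while the functional calculus for Hermitian matrices is real. -/
noncomputable local instance matrixRealNormedAlgebra : NormedAlgebra ℝ (Matrix n n 𝕜) where
  norm_smul_le c A := by
    have coe_smul : c • A = (c : 𝕜) • A := by
      ext i j
      exact RCLike.real_smul_eq_coe_mul c (A i j)
    rw [coe_smul, norm_smul, RCLike.norm_ofReal, Real.norm_eq_abs]

theorem golden_thompson {A B : Matrix n n 𝕜} (hA : A.IsHermitian) (hB : B.IsHermitian) :
    RCLike.re (trace (exp (A + B))) ≤ RCLike.re (trace (exp A * exp B)) := by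
  cases isEmpty_or_nonempty n with
  | inl _ => simp [trace]
  | inr _ =>
    have exp_pow (X : Matrix n n 𝕜) (k : ℕ) :
        exp (((2 ^ k : ℕ) : ℝ)⁻¹ • X) ^ 2 ^ k = exp X := by
      rw [← Matrix.exp_nsmul, ← Nat.cast_smul_eq_nsmul ℝ, smul_inv_smul₀ (by positivity)]
    have smul_hermitian {X : Matrix n n 𝕜} (hX : X.IsHermitian) (k : ℕ) :
        (exp (((2 ^ k : ℕ) : ℝ)⁻¹ • X)).IsHermitian := (hX.smul (.all _)).exp
    have lie_product := (tendsto_exp_mul_exp_pow ℝ A B).comp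
      (tendsto_pow_atTop_atTop_of_one_lt one_lt_two)
    have continuous_re_trace : Continuous fun X : Matrix n n 𝕜 => RCLike.re (trace X) := by
      fun_prop
    refine le_of_tendsto ((continuous_re_trace.tendsto _).comp lie_product) (.of_forall fun k => ?_)
    rw [← exp_pow A k, ← exp_pow B k]
    exact (re_trace_pow_two_pow_le_and_re_trace_mul_pow_two_pow_le k).2 _ _
      (smul_hermitian hA k) (smul_hermitian hB k)

theorem le_re_trace_of_mem_spectrum {P : Matrix n n 𝕜} (hP : 0 ≤ P) {μ : ℝ}
    (hμ : μ ∈ spectrum ℝ P) : μ ≤ RCLike.re (trace P) := by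
  have hP_psd := nonneg_iff_posSemidef.1 hP
  rw [hP_psd.isHermitian.spectrum_real_eq_range_eigenvalues] at hμ
  obtain ⟨i, rfl⟩ := hμ
  rw [hP_psd.isHermitian.trace_eq_sum_eigenvalues, ← RCLike.ofReal_sum, RCLike.ofReal_re]
  exact Finset.single_le_sum (fun j _ => hP_psd.eigenvalues_nonneg j) (Finset.mem_univ i)

theorem exp_nonneg_of_isHermitian {A : Matrix n n 𝕜} (hA : A.IsHermitian) : 0 ≤ exp A := by
  rw [← CFC.real_exp_eq_normedSpace_exp (a := A) hA]
  exact cfc_nonneg fun t _ => t.exp_nonneg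

theorem exp_le_re_trace_exp_of_mem_spectrum {A : Matrix n n 𝕜} (hA : A.IsHermitian) {μ : ℝ}
    (hμ : μ ∈ spectrum ℝ A) : Real.exp μ ≤ RCLike.re (trace (exp A)) := by
  refine le_re_trace_of_mem_spectrum (exp_nonneg_of_isHermitian hA) ?_
  rw [← CFC.real_exp_eq_normedSpace_exp (a := A) hA, cfc_map_spectrum Real.exp A]
  exact ⟨μ, hμ, rfl⟩

theorem exp_norm_le_re_trace_exp_add_re_trace_exp_neg [Nonempty n] {A : Matrix n n 𝕜}
    (hA : A.IsHermitian) :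
    Real.exp ‖A‖ ≤ RCLike.re (trace (exp A)) + RCLike.re (trace (exp (-A))) := by
  have trace_exp_nonneg {B : Matrix n n 𝕜} (hB : B.IsHermitian) :
      0 ≤ RCLike.re (trace (exp B)) :=
    (RCLike.nonneg_iff.1 (nonneg_iff_posSemidef.1 (exp_nonneg_of_isHermitian hB)).trace_nonneg).1
  obtain ⟨⟨μ, hμ, norm_μ : |μ| = ‖A‖⟩, -⟩ :=
    IsometricContinuousFunctionalCalculus.isGreatest_norm_spectrum (𝕜 := ℝ) A hA
  rw [← norm_μ]
  rcases abs_choice μ with abs_eq | abs_eq <;> rw [abs_eq]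
  · exact (exp_le_re_trace_exp_of_mem_spectrum hA hμ).trans
      (le_add_of_nonneg_right (trace_exp_nonneg hA.neg))
  · have hμ_neg : -μ ∈ spectrum ℝ (-A) := by rwa [← spectrum.neg_eq, Set.neg_mem_neg]
    exact (exp_le_re_trace_exp_of_mem_spectrum hA.neg hμ_neg).trans
      (le_add_of_nonneg_left (trace_exp_nonneg hA))

variable {ι : Type*} [Fintype ι] {p : ι → ℝ} {Y : ι → Matrix n n 𝕜}

theorem sum_mul_re_trace_exp_add_le (hp : ∀ i, 0 ≤ p i) (hY : ∀ i, (Y i).IsHermitian)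
    {M : ℝ} (hM : ∑ i, p i • exp (Y i) ≤ M • 1) {H : Matrix n n 𝕜} (hH : H.IsHermitian) :
    ∑ i, p i * RCLike.re (trace (exp (H + Y i))) ≤ M * RCLike.re (trace (exp H)) :=
  calc ∑ i, p i * RCLike.re (trace (exp (H + Y i)))
      ≤ ∑ i, p i * RCLike.re (trace (exp H * exp (Y i))) := Finset.sum_le_sum fun i _ =>
        mul_le_mul_of_nonneg_left (golden_thompson hH (hY i)) (hp i)
    _ = RCLike.re (trace (exp H * ∑ i, p i • exp (Y i))) := by
      simp only [Finset.mul_sum, trace_sum, mul_smul_comm, trace_smul, map_sum, RCLike.smul_re]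
    _ ≤ RCLike.re (trace (exp H * (M • 1))) :=
      re_trace_mul_le_re_trace_mul (exp_nonneg_of_isHermitian hH) hM
    _ = M * RCLike.re (trace (exp H)) := by
      rw [mul_smul_comm, mul_one, trace_smul, RCLike.smul_re]

theorem sum_prod_mul_re_trace_exp_add_sum_le (hp : ∀ i, 0 ≤ p i) (hY : ∀ i, (Y i).IsHermitian)
    {M : ℝ} (hM_nonneg : 0 ≤ M) (hM : ∑ i, p i • exp (Y i) ≤ M • 1) (r : ℕ) {H : Matrix n n 𝕜}
    (hH : H.IsHermitian) :
    ∑ j : Fin r → ι, (∏ t, p (j t)) * RCLike.re (trace (exp (H + ∑ t, Y (j t)))) ≤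
      M ^ r * RCLike.re (trace (exp H)) := by
  induction r generalizing H with
  | zero => simp
  | succ r ih =>
    calc ∑ j : Fin (r + 1) → ι, (∏ t, p (j t)) * RCLike.re (trace (exp (H + ∑ t, Y (j t))))
        = ∑ i, p i * ∑ j : Fin r → ι,
            (∏ t, p (j t)) * RCLike.re (trace (exp (H + Y i + ∑ t, Y (j t)))) := by
          rw [← (Fin.consEquiv fun _ => ι).sum_comp, Fintype.sum_prod_type]
          simp only [Fin.consEquiv_apply, Fin.prod_univ_succ, Fin.sum_univ_succ, Fin.cons_zero,
            Fin.cons_succ, Finset.mul_sum, mul_assoc, add_assoc]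
      _ ≤ ∑ i, p i * (M ^ r * RCLike.re (trace (exp (H + Y i)))) := Finset.sum_le_sum fun i _ =>
          mul_le_mul_of_nonneg_left (ih (hH.add (hY i))) (hp i)
      _ = M ^ r * ∑ i, p i * RCLike.re (trace (exp (H + Y i))) := by
          simp only [Finset.mul_sum, mul_left_comm]
      _ ≤ M ^ r * (M * RCLike.re (trace (exp H))) := by
          gcongr
          exact sum_mul_re_trace_exp_add_le hp hY hM hH
      _ = M ^ (r + 1) * RCLike.re (trace (exp H)) := by ring

variable [Nonempty n]

theorem sum_prod_mul_exp_norm_sum_le (hp : p ∈ stdSimplex ℝ ι) (hY : ∀ i, (Y i).IsHermitian)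
    (norm_le : ∀ i, ‖Y i‖ ≤ 1) (mean : ∑ i, p i • Y i = 0) {v : ℝ}
    (variance : ∑ i, p i • Y i ^ 2 ≤ v • 1) (r : ℕ) :
    ∑ j : Fin r → ι, (∏ t, p (j t)) * Real.exp ‖∑ t, Y (j t)‖ ≤
      2 * Fintype.card n * Real.exp (r * v) := by
  have trace_mgf_le {Z : ι → Matrix n n 𝕜} (hZ : ∀ i, (Z i).IsHermitian)
      (hM : ∑ i, p i • exp (Z i) ≤ Real.exp v • 1) :
      ∑ j : Fin r → ι, (∏ t, p (j t)) * RCLike.re (trace (exp (∑ t, Z (j t)))) ≤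
        Fintype.card n * Real.exp (r * v) := by
    rw [Real.exp_nat_mul]
    simpa [mul_comm] using sum_prod_mul_re_trace_exp_add_sum_le hp.1 hZ
      (Real.exp_nonneg v) hM r isHermitian_zero
  have mgf_pos := trace_mgf_le hY (sum_smul_exp_le_exp_smul_one hp hY norm_le mean variance)
  have mgf_neg := trace_mgf_le (fun i => (hY i).neg)
    (sum_smul_exp_le_exp_smul_one hp (fun i => (hY i).neg) (by simpa using norm_le)
      (by simpa using mean) (by simpa using variance))
  calc ∑ j : Fin r → ι, (∏ t, p (j t)) * Real.exp ‖∑ t, Y (j t)‖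
      ≤ ∑ j : Fin r → ι, (∏ t, p (j t)) * (RCLike.re (trace (exp (∑ t, Y (j t)))) +
          RCLike.re (trace (exp (∑ t, -Y (j t))))) := by
        refine Finset.sum_le_sum fun j _ =>
          mul_le_mul_of_nonneg_left ?_ (Finset.prod_nonneg fun t _ => hp.1 (j t))
        rw [Finset.sum_neg_distrib]
        exact exp_norm_le_re_trace_exp_add_re_trace_exp_neg
          (isSelfAdjoint_sum _ fun t _ => hY (j t))
    _ ≤ 2 * Fintype.card n * Real.exp (r * v) := by
        simp only [mul_add, Finset.sum_add_distrib]
        linarith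

theorem matrix_bernstein (hp : p ∈ stdSimplex ℝ ι) (hY : ∀ i, (Y i).IsHermitian) {L : ℝ}
    (norm_le : ∀ i, ‖Y i‖ ≤ L) (mean : ∑ i, p i • Y i = 0) {v : ℝ} (hv : 0 < v)
    (variance : ∑ i, p i • Y i ^ 2 ≤ v • 1) (r : ℕ) {ε : ℝ} (hε : 0 ≤ ε) (hεL : ε * L ≤ 2 * v) :
    1 - 2 * Fintype.card n * Real.exp (-(r * ε ^ 2 / (4 * v))) ≤
      ∑ j : Fin r → ι, Set.indicator {j | ‖∑ t, Y (j t)‖ ≤ r * ε} (fun j => ∏ t, p (j t)) j := by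
  -- This `θ` minimises the exponent `r * (v * θ ^ 2 - ε * θ)` of the Chernoff bound.
  set θ := ε / (2 * v) with hθ_def
  have hθ : 0 ≤ θ := by positivity
  have scaled_norm_le (i : ι) : ‖θ • Y i‖ ≤ 1 := by
    rw [norm_smul, Real.norm_of_nonneg hθ]
    calc θ * ‖Y i‖ ≤ θ * L := by gcongr; exact norm_le i
      _ ≤ 1 := by rw [hθ_def, div_mul_eq_mul_div]; exact div_le_one_of_le₀ hεL (by positivity)
  have scaled_variance : ∑ i, p i • (θ • Y i) ^ 2 ≤ (θ ^ 2 * v) • 1 := by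
    simp only [smul_pow, smul_comm (p _) (θ ^ 2), ← Finset.smul_sum, mul_smul]
    exact smul_le_smul_of_nonneg_left variance (sq_nonneg θ)
  have mgf_le := sum_prod_mul_exp_norm_sum_le hp (fun i => (hY i).smul (.all θ)) scaled_norm_le
    (by simp only [smul_comm (p _) θ, ← Finset.smul_sum, mean, smul_zero]) scaled_variance r
  simp only [← Finset.smul_sum, norm_smul, Real.norm_of_nonneg hθ] at mgf_le
  have total : ∑ j : Fin r → ι, ∏ t, p (j t) = 1 := by rw [← Fintype.sum_pow, hp.2, one_pow]
  have exponent : -(θ * (r * ε)) + r * (θ ^ 2 * v) = -(r * ε ^ 2 / (4 * v)) := by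
    rw [hθ_def]
    field_simp
    ring
  have chernoff := sum_le_sum_indicator_add_exp_mul_sum
    (w := fun j : Fin r → ι => ∏ t, p (j t)) (fun j => Finset.prod_nonneg fun t _ => hp.1 (j t))
    (fun j => ‖∑ t, Y (j t)‖) (r * ε) hθ
  have tail_le := mul_le_mul_of_nonneg_left mgf_le (Real.exp_nonneg (-(θ * (r * ε))))
  rw [mul_left_comm _ (2 * _), ← Real.exp_add, exponent] at tail_le
  rw [total] at chernoff
  linarith

end MatrixBernstein

section LeverageScores

open scoped Matrix.Norms.L2Operator MatrixOrder

theorem sum_vecMulVec_row {m n R : Type*} [Fintype m] [NonUnitalNonAssocSemiring R]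
    (A : Matrix m n R) : ∑ i, vecMulVec (A i) (A i) = Aᵀ * A := by
  ext a b
  simp [Matrix.sum_apply, vecMulVec_apply, Matrix.mul_apply]

theorem euclNorm_eq_norm_toLp {n : ℕ} (x : Fin n → ℝ) : euclNorm x = ‖WithLp.toLp 2 x‖ := by
  simp [euclNorm, EuclideanSpace.norm_eq]

theorem specNorm_le_norm {m n : ℕ} (A : Matrix (Fin m) (Fin n) ℝ) : specNorm A ≤ ‖A‖ := by
  refine Real.sSup_le ?_ (norm_nonneg A)
  rintro _ ⟨x, hx, rfl⟩
  rw [euclNorm_eq_norm_toLp] at hx ⊢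
  simpa [hx] using Matrix.l2_opNorm_mulVec A (WithLp.toLp 2 x)

variable {d ℓ : ℕ} (V : Matrix (Fin d) (Fin ℓ) ℝ) (i : Fin d)

theorem lvgProb_nonneg : 0 ≤ lvgProb V i := by
  unfold lvgProb
  positivity

/-- The rank-one matrix `v_i v_iᵀ / p_i` sampled with the `i`-th row `v_i` of `V`. A zero row has
`p_i = 0`, and then the junk value `p_i⁻¹ = 0` gives the zero matrix. -/
noncomputable def lvgSample : Matrix (Fin ℓ) (Fin ℓ) ℝ :=
  (lvgProb V i)⁻¹ • vecMulVec (V i) (V i)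

theorem isHermitian_lvgSample : (lvgSample V i).IsHermitian :=
  IsHermitian.smul (by simp [IsHermitian]) (.all _)

theorem transpose_mul_lvgMatrix_mul_transpose_mul {r : ℕ} (j : Fin r → Fin d) :
    Vᵀ * lvgMatrix V r j * (lvgMatrix V r j)ᵀ * V = (r : ℝ)⁻¹ • ∑ t, lvgSample V (j t) := by
  have transpose_mul (a : Fin ℓ) (t : Fin r) : (Vᵀ * lvgMatrix V r j) a t =
      V (j t) a * (1 / Real.sqrt (r * lvgProb V (j t))) := by
    simp [lvgMatrix, Matrix.mul_apply]
  have mul_swap : (lvgMatrix V r j)ᵀ * V = (Vᵀ * lvgMatrix V r j)ᵀ := by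
    rw [Matrix.transpose_mul, transpose_transpose]
  rw [Matrix.mul_assoc, mul_swap]
  ext a b
  rw [Matrix.mul_apply]
  simp only [transpose_apply, transpose_mul, Matrix.smul_apply, Matrix.sum_apply, lvgSample,
    vecMulVec_apply, smul_eq_mul, Finset.mul_sum]
  refine Finset.sum_congr rfl fun t _ => ?_
  have sqrt_sq := Real.mul_self_sqrt (mul_nonneg r.cast_nonneg (lvgProb_nonneg V (j t)))
  rw [mul_mul_mul_comm, one_div_mul_one_div, sqrt_sq, one_div, mul_inv]
  ring

variable {V}

theorem specNorm_one_sub_le_of_norm_sum_le {r : ℕ} (hr : 0 < r) {j : Fin r → Fin d} {ε : ℝ}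
    (hj : ‖∑ t, (lvgSample V (j t) - 1)‖ ≤ r * ε) :
    specNorm (1 - Vᵀ * lvgMatrix V r j * (lvgMatrix V r j)ᵀ * V) ≤ ε := by
  have average : 1 - Vᵀ * lvgMatrix V r j * (lvgMatrix V r j)ᵀ * V =
      -((r : ℝ)⁻¹ • ∑ t, (lvgSample V (j t) - 1)) := by
    have hr' : (r : ℝ) ≠ 0 := by positivity
    rw [transpose_mul_lvgMatrix_mul_transpose_mul, Finset.sum_sub_distrib, Finset.sum_const,
      Finset.card_univ, Fintype.card_fin, smul_sub, ← Nat.cast_smul_eq_nsmul ℝ,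
      inv_smul_smul₀ hr', neg_sub]
  refine (specNorm_le_norm _).trans ?_
  rw [average, norm_neg, norm_smul, norm_inv, RCLike.norm_natCast]
  exact (inv_mul_le_iff₀ (by positivity)).2 hj

variable (hℓ : 0 < ℓ)
include hℓ

theorem dotProduct_row_self : V i ⬝ᵥ V i = ℓ * lvgProb V i := by
  rw [lvgProb, mul_div_cancel₀ _ (by positivity)]
  simp [dotProduct, pow_two]

theorem lvgProb_smul_lvgSample : lvgProb V i • lvgSample V i = vecMulVec (V i) (V i) := by
  rcases eq_or_ne (lvgProb V i) 0 with hp | hp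
  · have row_eq_zero : V i = 0 :=
      dotProduct_self_eq_zero.1 (by rw [dotProduct_row_self i hℓ, hp, mul_zero])
    simp [row_eq_zero, hp]
  · exact smul_inv_smul₀ hp _

theorem lvgSample_sq : lvgSample V i ^ 2 = (ℓ : ℝ) • lvgSample V i := by
  rcases eq_or_ne (lvgProb V i) 0 with hp | hp
  · simp [lvgSample, hp]
  · rw [pow_two, lvgSample, smul_mul_smul_comm, vecMulVec_mul_vecMulVec, dotProduct_row_self i hℓ,
      vecMulVec_smul, smul_smul, smul_smul]
    congr 1
    field_simp

theorem norm_lvgSample_le : ‖lvgSample V i‖ ≤ ℓ := by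
  have norm_sq : ‖lvgSample V i‖ ^ 2 = ℓ * ‖lvgSample V i‖ := by
    rw [← (isHermitian_lvgSample V i).isSelfAdjoint.norm_mul_self, ← pow_two,
      lvgSample_sq i hℓ, norm_smul, RCLike.norm_natCast]
  nlinarith [norm_nonneg (lvgSample V i)]

theorem norm_lvgSample_sub_one_le : ‖lvgSample V i - 1‖ ≤ ℓ + 1 := by
  have : Nonempty (Fin ℓ) := ⟨⟨0, hℓ⟩⟩
  exact (norm_sub_le _ _).trans (add_le_add (norm_lvgSample_le i hℓ) norm_one.le)

variable (hV : Vᵀ * V = 1)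
include hV

theorem sum_lvgProb_smul_lvgSample : ∑ i, lvgProb V i • lvgSample V i = 1 := by
  simp only [lvgProb_smul_lvgSample _ hℓ, sum_vecMulVec_row, hV]

theorem lvgProb_mem_stdSimplex : lvgProb V ∈ stdSimplex ℝ (Fin d) := by
  refine ⟨lvgProb_nonneg V, ?_⟩
  have trace_eq := congrArg trace hV
  simp only [← sum_vecMulVec_row, trace_sum, trace_vecMulVec, dotProduct_row_self _ hℓ,
    ← Finset.mul_sum, trace_one, Fintype.card_fin] at trace_eq
  exact (mul_eq_left₀ (by positivity)).1 trace_eq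

theorem sum_lvgProb_smul_lvgSample_sub_one :
    ∑ i, lvgProb V i • (lvgSample V i - 1) = 0 := by
  simp only [smul_sub, Finset.sum_sub_distrib, sum_lvgProb_smul_lvgSample hℓ hV, ← Finset.sum_smul,
    (lvgProb_mem_stdSimplex hℓ hV).2, one_smul, sub_self]

theorem sum_lvgProb_smul_lvgSample_sub_one_sq :
    ∑ i, lvgProb V i • (lvgSample V i - 1) ^ 2 = ((ℓ : ℝ) - 1) • 1 := by
  have sub_one_sq (i : Fin d) :
      (lvgSample V i - 1) ^ 2 = ((ℓ : ℝ) - 1) • lvgSample V i - (lvgSample V i - 1) := by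
    rw [(Commute.one_right _).sub_sq, lvgSample_sq i hℓ, sub_smul]
    simp only [one_pow, mul_one, one_smul, two_mul]
    abel
  simp only [sub_one_sq, smul_sub (lvgProb V _) (_ • _), Finset.sum_sub_distrib,
    sum_lvgProb_smul_lvgSample_sub_one hℓ hV, sub_zero, smul_comm (lvgProb V _) ((ℓ : ℝ) - 1),
    ← Finset.smul_sum, sum_lvgProb_smul_lvgSample hℓ hV]

theorem one_sub_le_sum_indicator_norm_sum_lvgSample_sub_one (r : ℕ) {ε : ℝ} (hε : 0 ≤ ε)
    (hε_one : ε ≤ 1) :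
    1 - 2 * ℓ * Real.exp (-(r * ε ^ 2 / (4 * ℓ))) ≤ ∑ j : Fin r → Fin d,
      Set.indicator {j | ‖∑ t, (lvgSample V (j t) - 1)‖ ≤ r * ε}
        (fun j => ∏ t, lvgProb V (j t)) j := by
  have : Nonempty (Fin ℓ) := ⟨⟨0, hℓ⟩⟩
  have one_le : (1 : ℝ) ≤ ℓ := by exact_mod_cast hℓ
  have variance : ∑ i, lvgProb V i • (lvgSample V i - 1) ^ 2 ≤ (ℓ : ℝ) • 1 := by
    rw [sum_lvgProb_smul_lvgSample_sub_one_sq hℓ hV]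
    exact smul_le_smul_of_nonneg_right (by linarith) zero_le_one
  simpa using matrix_bernstein (lvgProb_mem_stdSimplex hℓ hV)
    (fun i => (isHermitian_lvgSample V i).sub isHermitian_one)
    (norm_lvgSample_sub_one_le · hℓ) (sum_lvgProb_smul_lvgSample_sub_one hℓ hV)
    (by positivity) variance r hε (by nlinarith)

end LeverageScores

theorem two_mul_mul_exp_neg_le_of_mul_log_le {ℓ ε δ r : ℝ} (hℓ : 1 ≤ ℓ)
    (hε : ε ∈ Set.Ioc (0 : ℝ) (1 / 2)) (hδ : 0 < δ)
    (hr : 8 * (ℓ / ε ^ 2) * Real.log (ℓ / (ε ^ 2 * Real.sqrt δ)) ≤ r) :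
    2 * ℓ * Real.exp (-(r * ε ^ 2 / (4 * ℓ))) ≤ δ := by
  obtain ⟨hε_pos, hε_half⟩ := hε
  set X := ℓ / (ε ^ 2 * Real.sqrt δ) with hX
  have hX_pos : 0 < X := by positivity
  have exponent_le : 2 * Real.log X ≤ r * ε ^ 2 / (4 * ℓ) := by
    rw [le_div_iff₀ (by positivity)]
    calc 2 * Real.log X * (4 * ℓ) = 8 * (ℓ / ε ^ 2) * Real.log X * ε ^ 2 := by
          field_simp
          ring
      _ ≤ r * ε ^ 2 := by gcongr
  have eps_pow_le : 2 * ε ^ 4 ≤ 1 := by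
    linarith [pow_le_pow_left₀ hε_pos.le hε_half 4]
  calc 2 * ℓ * Real.exp (-(r * ε ^ 2 / (4 * ℓ)))
      ≤ 2 * ℓ * Real.exp (-(2 * Real.log X)) := by gcongr
    _ = 2 * ℓ * (X ^ 2)⁻¹ := by
      rw [Real.exp_neg, ← Nat.cast_two, Real.exp_nat_mul, Real.exp_log hX_pos]
    _ = 2 * ε ^ 4 * δ / ℓ := by
      rw [hX, div_pow, mul_pow, Real.sq_sqrt hδ.le]
      field_simp
    _ ≤ δ := by
      rw [div_le_iff₀ (by positivity)]
      nlinarith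

/-- **Leverage-score sampling (Lemma 3).** There is an absolute constant `c > 0` such
that: for `ε ∈ (0,1/2]`, `δ ∈ (0,1)`, `V ∈ ℝ^{d×ℓ}` with orthonormal columns, and
`r ≥ c·(ℓ/ε²)·log(ℓ/(ε²√δ))`, if `r` indices are drawn i.i.d. from the leverage-score
distribution `(p_1,…,p_d)` and `R` is the corresponding sampling-and-rescaling matrix,
then with probability at least `1 − δ`,
`‖VᵀV − VᵀRRᵀV‖₂ = ‖I_ℓ − VᵀRRᵀV‖₂ ≤ ε`.  (The probability of the event is the sum,
over index tuples `j` in the event, of `∏ t, p_{j_t}`.) -/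
theorem leverage_score_sampling :
    ∃ c : ℝ, 0 < c ∧
      ∀ (d ℓ : ℕ), 0 < ℓ →
      ∀ ε δ : ℝ, ε ∈ Set.Ioc (0 : ℝ) (1 / 2) → δ ∈ Set.Ioo (0 : ℝ) 1 →
      ∀ V : Matrix (Fin d) (Fin ℓ) ℝ, Vᵀ * V = 1 →
      ∀ r : ℕ, c * ((ℓ : ℝ) / ε ^ 2) * Real.log ((ℓ : ℝ) / (ε ^ 2 * Real.sqrt δ)) ≤ (r : ℝ) →
        1 - δ ≤ ∑ j : Fin r → Fin d,
          Set.indicator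
            {j : Fin r → Fin d |
              specNorm (Vᵀ * V - Vᵀ * lvgMatrix V r j * (lvgMatrix V r j)ᵀ * V)
                = specNorm (1 - Vᵀ * lvgMatrix V r j * (lvgMatrix V r j)ᵀ * V) ∧
              specNorm (1 - Vᵀ * lvgMatrix V r j * (lvgMatrix V r j)ᵀ * V) ≤ ε}
            (fun j => ∏ t, lvgProb V (j t)) j := by
  refine ⟨8, by norm_num, fun d ℓ hℓ ε δ hε hδ V hV r hr => ?_⟩
  have one_le : (1 : ℝ) ≤ ℓ := by exact_mod_cast hℓ
  have failure_le : 2 * ℓ * Real.exp (-(r * ε ^ 2 / (4 * ℓ))) ≤ δ :=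
    two_mul_mul_exp_neg_le_of_mul_log_le one_le hε hδ.1 hr
  have hr_pos : 0 < r := by
    refine Nat.pos_of_ne_zero fun hr_zero => ?_
    simp only [hr_zero, Nat.cast_zero, zero_mul, zero_div, neg_zero, Real.exp_zero] at failure_le
    linarith [hδ.2]
  calc 1 - δ ≤ 1 - 2 * ℓ * Real.exp (-(r * ε ^ 2 / (4 * ℓ))) := by linarith
    _ ≤ _ := one_sub_le_sum_indicator_norm_sum_lvgSample_sub_one hℓ hV r hε.1.le
      (hε.2.trans (by norm_num))
    _ ≤ _ := Finset.sum_le_sum fun j _ => Set.indicator_le_indicator_of_subset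
      (Set.ofPred_subset_ofPred.2 fun j hj =>
        ⟨by rw [hV], specNorm_one_sub_le_of_norm_sum_le hr_pos hj⟩)
      (fun j => Finset.prod_nonneg fun t _ => lvgProb_nonneg V (j t)) j
end

section
/- In the SVM dual setup, let X ∈ ℝ^{p×d} have rank ρ and compact singular value decomposition X = UΣV^T, let R ∈ ℝ^{d×r} be any matrix, and set E = I_ρ − V^T R R^T V. Suppose α* ∈ K maximizes f over K and α̃* ∈ K maximizes f̃ over K. Then f(α*) ≥ f̃(α̃*) − (1/2) · (Y α̃*)^T U Σ E Σ U^T (Y α̃*). -/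
open Matrix

/-- The SVM dual feasible set `K = {α : 0 ≤ αᵢ ≤ C, Σᵢ yᵢαᵢ = 0}`. -/
def svmFeasible {p : ℕ} (y : Fin p → ℝ) (C : ℝ) (α : Fin p → ℝ) : Prop :=
  (∀ i, 0 ≤ α i ∧ α i ≤ C) ∧ ∑ i, y i * α i = 0

/-- The SVM dual objective `f(α) = Σᵢ αᵢ − (1/2)‖XᵀYα‖₂²`, where `Y = diag(y)`. -/
noncomputable def svmDualObj {p d : ℕ} (X : Matrix (Fin p) (Fin d) ℝ) (y : Fin p → ℝ)
    (α : Fin p → ℝ) : ℝ :=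
  ∑ i, α i - (1 / 2) * euclNorm (Xᵀ.mulVec ((Matrix.diagonal y).mulVec α)) ^ 2

/-- The reduced SVM dual objective `f̃(α) = Σᵢ αᵢ − (1/2)‖RᵀXᵀYα‖₂²`. -/
noncomputable def svmDualObjRed {p d r : ℕ} (X : Matrix (Fin p) (Fin d) ℝ)
    (R : Matrix (Fin d) (Fin r) ℝ) (y : Fin p → ℝ) (α : Fin p → ℝ) : ℝ :=
  ∑ i, α i - (1 / 2) * euclNorm (Rᵀ.mulVec (Xᵀ.mulVec ((Matrix.diagonal y).mulVec α))) ^ 2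

/-! As `α̃*` is feasible, `f(α̃*) ≤ f(α*)`, so it suffices to compute `f̃(α̃*) - f(α̃*)`. Both
objectives are quadratic, `f` with Gram matrix `X Xᵀ` and `f̃` with Gram matrix `X R Rᵀ Xᵀ`. If
`X = A Vᵀ` and `Vᵀ V = 1`, these Gram matrices are `A Aᵀ` and `A (Vᵀ R Rᵀ V) Aᵀ`, whose difference
is `A (1 - Vᵀ R Rᵀ V) Aᵀ`; the singular value decomposition is the case `A = U Σ`. -/

theorem euclNorm_sq {n : ℕ} (x : Fin n → ℝ) : euclNorm x ^ 2 = x ⬝ᵥ x := by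
  rw [euclNorm, Real.sq_sqrt (Finset.sum_nonneg fun i _ => sq_nonneg (x i))]
  simp only [dotProduct, sq]

theorem euclNorm_transpose_mulVec_sq {m n : ℕ} (A : Matrix (Fin m) (Fin n) ℝ) (z : Fin m → ℝ) :
    euclNorm (Aᵀ *ᵥ z) ^ 2 = z ⬝ᵥ ((A * Aᵀ) *ᵥ z) := by
  rw [euclNorm_sq, ← mulVec_mulVec, dotProduct_mulVec z A, mulVec_transpose]

theorem mul_one_sub_mul_transpose_eq_gram_sub_gram {S m n k l : Type*} [CommRing S]
    [Fintype n] [Fintype k] [DecidableEq k] [Fintype l]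
    (A : Matrix m k S) {V : Matrix n k S} (hV : Vᵀ * V = 1) (R : Matrix n l S) :
    A * (1 - Vᵀ * R * Rᵀ * V) * Aᵀ =
      A * Vᵀ * (A * Vᵀ)ᵀ - A * Vᵀ * R * (A * Vᵀ * R)ᵀ := by
  have gram_eq : A * Vᵀ * (A * Vᵀ)ᵀ = A * Aᵀ := by
    calc A * Vᵀ * (A * Vᵀ)ᵀ = A * (Vᵀ * V) * Aᵀ := by
          simp only [transpose_mul, transpose_transpose, Matrix.mul_assoc]
      _ = A * Aᵀ := by rw [hV, Matrix.mul_one]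
  rw [gram_eq]
  simp only [transpose_mul, transpose_transpose, Matrix.mul_sub, Matrix.sub_mul, Matrix.mul_one,
    Matrix.mul_assoc]

section DualObjective

variable {p d r : ℕ}

theorem svmDualObj_eq_sum_sub_gram (X : Matrix (Fin p) (Fin d) ℝ) (y α : Fin p → ℝ) :
    svmDualObj X y α =
      ∑ i, α i - (1 / 2) * ((diagonal y *ᵥ α) ⬝ᵥ ((X * Xᵀ) *ᵥ (diagonal y *ᵥ α))) := by
  rw [svmDualObj, euclNorm_transpose_mulVec_sq]

theorem svmDualObjRed_eq_svmDualObj_mul (X : Matrix (Fin p) (Fin d) ℝ)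
    (R : Matrix (Fin d) (Fin r) ℝ) (y α : Fin p → ℝ) :
    svmDualObjRed X R y α = svmDualObj (X * R) y α := by
  rw [svmDualObjRed, svmDualObj, transpose_mul, mulVec_mulVec (diagonal y *ᵥ α) Rᵀ Xᵀ]

variable {κ : Type*} [Fintype κ] [DecidableEq κ]

theorem svmDualObj_eq_svmDualObjRed_sub (A : Matrix (Fin p) κ ℝ) {V : Matrix (Fin d) κ ℝ}
    (hV : Vᵀ * V = 1) (R : Matrix (Fin d) (Fin r) ℝ) (y α : Fin p → ℝ) :
    svmDualObj (A * Vᵀ) y α =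
      svmDualObjRed (A * Vᵀ) R y α
        - (1 / 2) * ((diagonal y *ᵥ α) ⬝ᵥ
            ((A * (1 - Vᵀ * R * Rᵀ * V) * Aᵀ) *ᵥ (diagonal y *ᵥ α))) := by
  rw [svmDualObjRed_eq_svmDualObj_mul, svmDualObj_eq_sum_sub_gram, svmDualObj_eq_sum_sub_gram,
    mul_one_sub_mul_transpose_eq_gram_sub_gram A hV R, sub_mulVec, dotProduct_sub]
  ring

theorem svm_dual_optimum_comparison_general
    (A : Matrix (Fin p) κ ℝ) {V : Matrix (Fin d) κ ℝ} (hV : Vᵀ * V = 1)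
    (R : Matrix (Fin d) (Fin r) ℝ) {y : Fin p → ℝ} {C : ℝ} {αs : Fin p → ℝ}
    (hαs : IsMaxOn (svmDualObj (A * Vᵀ) y) {β | svmFeasible y C β} αs)
    {α : Fin p → ℝ} (hα : svmFeasible y C α) :
    svmDualObj (A * Vᵀ) y αs
      ≥ svmDualObjRed (A * Vᵀ) R y α
        - (1 / 2) * ((diagonal y *ᵥ α) ⬝ᵥ
            ((A * (1 - Vᵀ * R * Rᵀ * V) * Aᵀ) *ᵥ (diagonal y *ᵥ α))) :=
  (svmDualObj_eq_svmDualObjRed_sub A hV R y α).symm.trans_le (hαs hα)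

end DualObjective

/-- **Dual optimum comparison (eqn. (7) of the paper).** If `α*` maximizes the SVM
dual `f` over `K` and `α̃*` maximizes the reduced dual `f̃` over `K`, then
`f(α*) ≥ f̃(α̃*) − (1/2)(Yα̃*)ᵀ U Σ E Σ Uᵀ (Yα̃*)`, where `E = I_ρ − VᵀRRᵀV`. -/
theorem svm_dual_optimum_comparison
    (p d r ρ : ℕ)
    (X : Matrix (Fin p) (Fin d) ℝ) (hrank : X.rank = ρ)
    (U : Matrix (Fin p) (Fin ρ) ℝ) (S : Matrix (Fin ρ) (Fin ρ) ℝ)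
    (V : Matrix (Fin d) (Fin ρ) ℝ)
    (hU : Uᵀ * U = 1) (hV : Vᵀ * V = 1)
    (hS : ∃ σ : Fin ρ → ℝ, (∀ i, 0 < σ i) ∧ S = Matrix.diagonal σ)
    (hX : X = U * S * Vᵀ)
    (R : Matrix (Fin d) (Fin r) ℝ)
    (y : Fin p → ℝ) (hy : ∀ i, y i = 1 ∨ y i = -1)
    (C : ℝ) (hC : 0 < C)
    (αs : Fin p → ℝ) (hαs : svmFeasible y C αs)
    (hαsmax : ∀ β, svmFeasible y C β → svmDualObj X y β ≤ svmDualObj X y αs)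
    (αt : Fin p → ℝ) (hαt : svmFeasible y C αt)
    (hαtmax : ∀ β, svmFeasible y C β → svmDualObjRed X R y β ≤ svmDualObjRed X R y αt) :
    svmDualObj X y αs
      ≥ svmDualObjRed X R y αt
        - (1 / 2) * dotProduct ((Matrix.diagonal y).mulVec αt)
            ((U * S * ((1 : Matrix (Fin ρ) (Fin ρ) ℝ) - Vᵀ * R * Rᵀ * V) * S * Uᵀ).mulVec
              ((Matrix.diagonal y).mulVec αt)) := by
  obtain ⟨σ, -, rfl⟩ := hS
  subst hX
  simpa only [transpose_mul, diagonal_transpose, Matrix.mul_assoc] using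
    svm_dual_optimum_comparison_general (U * diagonal σ) hV R hαsmax hαt
end
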